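/- For β>1 and h>0 small enough, as N→∞, 𝔼^{CW}_{m_-(N)}[τ_{m_+(N)}] = exp(βN[f_β(m*)−f_β(m_-)]) · (π/(1+m*)) · √((1−(m*)²)/(1−m_-²)) · N(1+o(1)) / ( β·√( f''_β(m_-)·(−f''_β(m*)) ) ). -/

import Mathlib

open MeasureTheory Filter Finset
open scoped Classical ENNReal NNReal Topology

noncomputable section

namespace RDCW

/-- The real value of a Boolean spin. -/
def spin (b : Bool) : ℝ := if b then 1 else -1

/-- Spin configurations on `N` vertices. -/
abbrev Conf (N : ℕ) := Fin N → Bool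

/-- Empirical magnetisation. -/
def mag {N : ℕ} (σ : Conf N) : ℝ := (N : ℝ)⁻¹ * ∑ i, spin (σ i)

/-- The set `Γ_N` of attainable magnetisations. -/
def Gamma (N : ℕ) : Set ℝ := Set.range (fun σ : Conf N => mag σ)

/-- `Γ_N` as a finite set. -/
def GammaF (N : ℕ) : Finset ℝ :=
  Finset.image (fun σ : Conf N => mag σ) Finset.univ

/-- Configurations with magnetisation `m`, as a finset. -/
def level (N : ℕ) (m : ℝ) : Finset (Conf N) := Finset.univ.filter fun σ => mag σ = m

/-- Configurations with magnetisation `m`, as a set (`S_N[m]`). -/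
def SLev (N : ℕ) (m : ℝ) : Set (Conf N) := {σ | mag σ = m}

/-- The entropy `I_N(m) = -(1/N) log |S_N[m]|`
(for `m ∈ Γ_N` the cardinality is the binomial coefficient `C(N, (1+m)N/2)`). -/
def IN (N : ℕ) (m : ℝ) : ℝ := -(N : ℝ)⁻¹ * Real.log ((level N m).card)

/-- Two configurations differ by a single spin flip. -/
def Nbr {N : ℕ} (σ σ' : Conf N) : Prop :=
  (Finset.univ.filter fun i => σ i ≠ σ' i).card = 1

/-- The index set of the couplings: pairs `i < j`. -/
abbrev CIdx (N : ℕ) := {ij : Fin N × Fin N // ij.1 < ij.2}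

/-- A realisation of the random couplings. -/
abbrev Couplings (N : ℕ) := CIdx N → Bool

/-- Real value of a coupling. -/
def Jval {N : ℕ} (J : Couplings N) (e : CIdx N) : ℝ := if J e then 1 else 0

/-- The RDCW Hamiltonian. -/
def H (N : ℕ) (p h : ℝ) (J : Couplings N) (σ : Conf N) : ℝ :=
  -((N : ℝ) * p)⁻¹ * ∑ e : CIdx N, Jval J e * spin (σ e.1.1) * spin (σ e.1.2)
    - h * ∑ i, spin (σ i)

/-- The Curie--Weiss Hamiltonian. -/
def Hcw (N : ℕ) (h : ℝ) (σ : Conf N) : ℝ :=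
  -(N : ℝ)⁻¹ * ∑ e : CIdx N, spin (σ e.1.1) * spin (σ e.1.2) - h * ∑ i, spin (σ i)

/-- The centred random part `Δ` of the Hamiltonian. -/
def Delta (N : ℕ) (p : ℝ) (J : Couplings N) (σ : Conf N) : ℝ :=
  -((N : ℝ) * p)⁻¹ * ∑ e : CIdx N, (Jval J e - p) * spin (σ e.1.1) * spin (σ e.1.2)

/-- Partition function for a Hamiltonian. -/
def Z (N : ℕ) (β : ℝ) (Ham : Conf N → ℝ) : ℝ := ∑ σ : Conf N, Real.exp (-β * Ham σ)

/-- Gibbs measure for a Hamiltonian. -/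
def gibbs (N : ℕ) (β : ℝ) (Ham : Conf N → ℝ) (σ : Conf N) : ℝ :=
  Real.exp (-β * Ham σ) / Z N β Ham

/-- Off-diagonal Metropolis rates. -/
def flipP (N : ℕ) (β : ℝ) (Ham : Conf N → ℝ) (σ σ' : Conf N) : ℝ :=
  if Nbr σ σ' then (N : ℝ)⁻¹ * Real.exp (-β * max (Ham σ' - Ham σ) 0) else 0

/-- Metropolis (Glauber) transition probabilities. -/
def transP (N : ℕ) (β : ℝ) (Ham : Conf N → ℝ) (σ σ' : Conf N) : ℝ :=
  if σ' = σ then 1 - ∑ η ∈ Finset.univ.erase σ, flipP N β Ham σ η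
  else flipP N β Ham σ σ'

/-- Probability of a finite trajectory of a Markov chain with kernel `P`. -/
def pathProb {S : Type*} (P : S → S → ℝ) : S → List S → ℝ
  | _, [] => 1
  | x, y :: l => P x y * pathProb P y l

/-- `FirstHit A B l` says that the (time ≥ 1) trajectory `l` stays outside `A ∪ B`
until its final state, which belongs to `B`; this is the cylinder event
`{τ_B < τ_A, τ_B = l.length}`. -/
def FirstHit {S : Type*} (A B : Set S) : List S → Prop
  | [] => False
  | [x] => x ∈ B
  | x :: y :: l => x ∉ A ∧ x ∉ B ∧ FirstHit A B (y :: l)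

/-- `ℙ_σ(τ_B < τ_A)` for the chain with kernel `P`. -/
def hitProb {S : Type*} (P : S → S → ℝ) (σ : S) (A B : Set S) : ℝ :=
  ∑' l : List S, if FirstHit A B l then pathProb P σ l else 0

/-- `𝔼_σ[τ_B]` for the chain with kernel `P`. -/
def hitTimeExp {S : Type*} (P : S → S → ℝ) (σ : S) (B : Set S) : ℝ :=
  ∑' l : List S, if FirstHit (∅ : Set S) B l then (l.length : ℝ) * pathProb P σ l else 0

/-- The harmonic function `h_{A,B}`. -/
def harm {S : Type*} (P : S → S → ℝ) (A B : Set S) (σ : S) : ℝ :=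
  if σ ∈ A then 1 else if σ ∈ B then 0 else hitProb P σ B A

/-- Capacity via the Dirichlet principle. -/
def capac (N : ℕ) (β : ℝ) (Ham : Conf N → ℝ) (A B : Set (Conf N)) : ℝ :=
  sInf {x : ℝ | ∃ f : Conf N → ℝ, (∀ σ, 0 ≤ f σ ∧ f σ ≤ 1) ∧
    (∀ σ ∈ A, f σ = 1) ∧ (∀ σ ∈ B, f σ = 0) ∧
    x = ∑ σ : Conf N, ∑ σ' : Conf N,
      gibbs N β Ham σ * transP N β Ham σ σ' * (f σ - f σ') ^ 2}

/-- Bernoulli measure on `Bool`. -/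
def bern (p : ℝ) : Measure Bool :=
  p.toNNReal • Measure.dirac true + (1 - p).toNNReal • Measure.dirac false

instance (p : ℝ) : IsFiniteMeasure (bern p) := by unfold bern; infer_instance

/-- The joint law `ℙ_J` of the i.i.d. Bernoulli(p) couplings. -/
def PJ (N : ℕ) (p : ℝ) : Measure (Couplings N) := Measure.pi fun _ => bern p

/-- `E(m) = -m²/2 - hm`. -/
def Em (h m : ℝ) : ℝ := -m ^ 2 / 2 - h * m

/-- Transition probabilities of the Curie--Weiss magnetisation chain on `ℝ ⊇ Γ_N`. -/
def rCW (N : ℕ) (β h : ℝ) (m m' : ℝ) : ℝ :=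
  if m' = m + 2 / N then Real.exp (-β * N * max (Em h m' - Em h m) 0) * ((1 - m) / 2)
  else if m' = m - 2 / N then Real.exp (-β * N * max (Em h m' - Em h m) 0) * ((1 + m) / 2)
  else if m' = m then
    1 - Real.exp (-β * N * max (Em h (m + 2 / N) - Em h m) 0) * ((1 - m) / 2)
      - Real.exp (-β * N * max (Em h (m - 2 / N) - Em h m) 0) * ((1 + m) / 2)
  else 0

/-- The entropy `I(m)`. -/
def Ient (m : ℝ) : ℝ :=
  (1 - m) / 2 * Real.log ((1 - m) / 2) + (1 + m) / 2 * Real.log ((1 + m) / 2)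

/-- The Curie--Weiss free energy `f_β(m) = E(m) + β⁻¹ I(m)`. -/
def fE (β h m : ℝ) : ℝ := Em h m + β⁻¹ * Ient m

/-- The double-well structure of `f_β` in the metastable regime `β > 1`, `h > 0` small:
two local minima `m_- < 0 < m_+` and a local maximum `m* ∈ (m_-, m_+)`, all solving
`m = tanh(β(m+h))`, with `f_β(m_-) > f_β(m_+)`. -/
structure DoubleWell (β h mminus mstar mplus : ℝ) : Prop where
  lt_star : mminus < mstar
  star_lt : mstar < mplus
  neg : mminus < 0
  pos : 0 < mplus
  locmin_minus : IsLocalMin (fE β h) mminus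
  locmin_plus : IsLocalMin (fE β h) mplus
  locmax_star : IsLocalMax (fE β h) mstar
  fix_minus : mminus = Real.tanh (β * (mminus + h))
  fix_star : mstar = Real.tanh (β * (mstar + h))
  fix_plus : mplus = Real.tanh (β * (mplus + h))
  f_lt : fE β h mplus < fE β h mminus

/-- `y` is a point of `s` closest to `x`. -/
def ClosestIn (s : Set ℝ) (x y : ℝ) : Prop := y ∈ s ∧ ∀ z ∈ s, |x - y| ≤ |x - z|

/-- `α = β²(1-p)/(4p)`. -/
def alphaC (β p : ℝ) : ℝ := β ^ 2 * (1 - p) / (4 * p)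

/-- `κ = α + sup_{η∈(0,1)} [log η - β √(2α + log(c₁/(1-η)²)) / (p √(2c₂))]`. -/
def kappaC (β p c₁ c₂ : ℝ) : ℝ :=
  alphaC β p + sSup ((fun η : ℝ => Real.log η -
      β * Real.sqrt (2 * alphaC β p + Real.log (c₁ / (1 - η) ^ 2)) /
        (p * Real.sqrt (2 * c₂))) '' Set.Ioo (0 : ℝ) 1)

/-- Talagrand's concentration inequality with constants `c₁, c₂`: for every `M`, every
convex function `G` which is 1-Lipschitz w.r.t. the Euclidean norm, and independent
random variables `X₁, …, X_M` (jointly a product measure) bounded by `K`,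
`ℙ(|G(X) - 𝔼 G(X)| ≥ tK) ≤ c₁ e^{-c₂ t²}`. -/
def IsTalagrand (c₁ c₂ : ℝ) : Prop :=
  ∀ (M : ℕ) (G : (Fin M → ℝ) → ℝ),
    ConvexOn ℝ Set.univ G →
    (∀ x y : Fin M → ℝ, |G x - G y| ≤ Real.sqrt (∑ i, (x i - y i) ^ 2)) →
    ∀ (μ : Fin M → Measure ℝ) [∀ i, IsProbabilityMeasure (μ i)],
      ∀ K : ℝ, 0 < K → (∀ i, ∀ᵐ x ∂μ i, |x| ≤ K) →
        ∀ t : ℝ, 0 ≤ t →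
          (Measure.pi μ {x | t * K ≤ |G x - ∫ y, G y ∂Measure.pi μ|}).toReal ≤
            c₁ * Real.exp (-c₂ * t ^ 2)

/-- `𝒵_{N,g}` (with `e^{-βΔ}`). -/
def Zg (N : ℕ) (p β : ℝ) (g : ℝ → ℝ) (J : Couplings N) : ℝ :=
  ∑ m ∈ GammaF N, g m * ∑ σ ∈ level N m, Real.exp (-β * Delta N p J σ)

/-- The variant of `𝒵_{N,g}` with `e^{+βΔ}`. -/
def ZgPlus (N : ℕ) (p β : ℝ) (g : ℝ → ℝ) (J : Couplings N) : ℝ :=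
  ∑ m ∈ GammaF N, g m * ∑ σ ∈ level N m, Real.exp (β * Delta N p J σ)

/-- `F_{N,g} = (1/N) log 𝒵_{N,g}`. -/
def Fg (N : ℕ) (p β : ℝ) (g : ℝ → ℝ) (J : Couplings N) : ℝ :=
  (N : ℝ)⁻¹ * Real.log (Zg N p β g J)

/-- `p_{N,g} = 𝔼[F_{N,g}]`. -/
def pg (N : ℕ) (p β : ℝ) (g : ℝ → ℝ) : ℝ := ∫ J, Fg N p β g J ∂PJ N p

/-- `∑_{m∈Γ_N} g(m) e^{-N I_N(m)}`. -/
def entSum (N : ℕ) (g : ℝ → ℝ) : ℝ := ∑ m ∈ GammaF N, g m * Real.exp (-(N : ℝ) * IN N m)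

/-- Mesoscopic measure `Q_{β,N}(m)`. -/
def Qmeso (N : ℕ) (β : ℝ) (Ham : Conf N → ℝ) (m : ℝ) : ℝ :=
  ∑ σ ∈ level N m, gibbs N β Ham σ

/-- `𝔼_{ν_{A,B}}[τ_B]`, where `ν_{A,B}` is the last-exit biased distribution on `A`. -/
def lastExitMeanHit (N : ℕ) (β : ℝ) (Ham : Conf N → ℝ) (A B : Set (Conf N)) : ℝ :=
  (∑ σ ∈ Finset.univ.filter (· ∈ A),
      gibbs N β Ham σ * hitProb (transP N β Ham) σ A B * hitTimeExp (transP N β Ham) σ B) /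
  (∑ σ ∈ Finset.univ.filter (· ∈ A), gibbs N β Ham σ * hitProb (transP N β Ham) σ A B)

/-- The unit flow `φ_N` on the magnetisation space. -/
def phiFlow (N : ℕ) (m₁ m₂ m m' : ℝ) : ℝ :=
  if m' = m + 2 / N ∧ m₁ ≤ m ∧ m ≤ m₂ - 2 / N then
    ((1 - m) * N / 2 * Real.exp (-(N : ℝ) * IN N m))⁻¹
  else if m' = m - 2 / N ∧ m₁ + 2 / N ≤ m ∧ m ≤ m₂ then
    -((1 + m) * N / 2 * Real.exp (-(N : ℝ) * IN N m))⁻¹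
  else 0

/-- `U_δ = {m ∈ [-1,1] : f_β(m) ≤ f_β(m_-) + δ}`. -/
def Uset (β h mminus δ : ℝ) : Set ℝ :=
  {m | m ∈ Set.Icc (-1 : ℝ) 1 ∧ fE β h m ≤ fE β h mminus + δ}

/-- `U_δ(m_+)`: the connected component of `U_δ` containing `m_+`. -/
def Ucomp (β h mminus mplus δ : ℝ) : Set ℝ := connectedComponentIn (Uset β h mminus δ) mplus

/-- The function `ℓ_N`. -/
def ellN (β h mpN x : ℝ) : ℝ :=
  (1 / 2) * (x * (Real.log 2 + β * |2 - 2 * h| + 1)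
    - (1 - mpN + x) * Real.log (1 - mpN + x) + (1 - mpN) * Real.log (1 - mpN))

/-- Specification of `δ_N`. -/
def DeltaNSpec (β h mminus mplus δ : ℝ) (N : ℕ) (d : ℝ) : Prop :=
  IsGreatest {d' : ℝ | 0 < d' ∧ d' ≤ δ ∧
    ∃ m ∈ Ucomp β h mminus mplus δ ∩ Gamma N, m < mplus ∧ fE β h m = fE β h mminus + d'} d

/-- Specification of `m_{δ_N}`: the left endpoint of `U_{δ_N}(m_+) ∩ Γ_N`,
with `f_β(m_{δ_N}) = f_β(m_-) + δ_N`. -/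
def MdeltaSpec (β h mminus mplus dN : ℝ) (N : ℕ) (x : ℝ) : Prop :=
  IsLeast (Ucomp β h mminus mplus dN ∩ Gamma N) x ∧ fE β h x = fE β h mminus + dN

/-- Specification of `ε_N`. -/
def EpsNSpec (β h mminus mplus dN ε : ℝ) (N : ℕ) (e : ℝ) : Prop :=
  IsGreatest {e' : ℝ | 0 < e' ∧ e' ≤ ε ∧
    ∃ m ∈ Ucomp β h mminus mplus dN ∩ Gamma N, m < mplus ∧ fE β h m = fE β h mplus + e'} e

/-- Specification of `m_{ε_N}`. -/
def MepsSpec (β h mminus mplus dN eN : ℝ) (N : ℕ) (x : ℝ) : Prop :=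
  x ∈ Ucomp β h mminus mplus dN ∩ Gamma N ∧ x < mplus ∧ fE β h x = fE β h mplus + eN

/-!
The chain is a birth–death chain, so the mean time to climb from `x` to `y` is exactly the double
sum over `x ≤ x' < y`, `y' ≤ x'` of `Q(y') / (Q(x') r(x'))`, where `Q` is the reversible weight and
`r` the probability of a step up. Stirling's formula turns a term into a prefactor of order one
times `exp (βN (f(x') - f(y')))`. On `{y' ≤ x'}` the difference `f(x') - f(y')` has a unique
maximum, at `x' = m*`, `y' = m₋`, and it is nondegenerate, so Laplace's method on the lattice of
mesh `2/N` evaluates the double sum as `N` times a Gaussian integral in the coordinates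
`√N (x' - m*)`, `√N (y' - m₋)`. At the maximum the Stirling prefactors leave
`√((1 - m*²)/(1 - m₋²))`, and `m* = tanh (β(m* + h))` collapses the limit of `r` to
`(1 - |m*|)/2`.
-/

section HittingTime

variable {S : Type*} {P : S → S → ℝ} {V : Finset S} {b : S}

/-- The lists of length at most `n` with entries in `W`: a finite window of the trajectories over
which `hitTimeExp` sums. -/
def listsUpTo (W : Finset S) : ℕ → Finset (List S)
  | 0 => {[]}
  | n + 1 => insert [] ((W ×ˢ listsUpTo W n).image fun p => p.1 :: p.2)

lemma mem_listsUpTo {W : Finset S} {n : ℕ} {l : List S} :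
    l ∈ listsUpTo W n ↔ l.length ≤ n ∧ ∀ x ∈ l, x ∈ W := by
  induction n generalizing l with
  | zero => cases l <;> simp [listsUpTo]
  | succ n ih => cases l <;> simp [listsUpTo, ih]; tauto

lemma sum_listsUpTo_succ (W : Finset S) (n : ℕ) (g : List S → ℝ) :
    ∑ l ∈ listsUpTo W (n + 1), g l = g [] + ∑ y ∈ W, ∑ l ∈ listsUpTo W n, g (y :: l) := by
  rw [listsUpTo, sum_insert (by simp), sum_image, sum_product]
  rintro ⟨a, k⟩ _ ⟨c, l⟩ _ h
  simpa using h

lemma firstHit_cons_of_mem {B : Set S} {y : S} (hy : y ∈ B) (l : List S) :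
    FirstHit ∅ B (y :: l) ↔ l = [] := by
  cases l <;> simp [FirstHit, hy]

lemma firstHit_cons_of_notMem {B : Set S} {y : S} (hy : y ∉ B) (l : List S) :
    FirstHit ∅ B (y :: l) ↔ FirstHit ∅ B l := by
  cases l <;> simp [FirstHit, hy]

lemma pathProb_nonneg_of_firstHit (hP0 : ∀ x ∈ V, ∀ y, 0 ≤ P x y)
    (hPz : ∀ x ∈ V, ∀ y ∉ insert b V, P x y = 0) {l : List S} :
    ∀ {x}, x ∈ V → FirstHit ∅ {b} l → 0 ≤ pathProb P x l := by
  induction l with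
  | nil => simp [FirstHit]
  | cons y l ih =>
    intro x hx hl
    rw [pathProb]
    by_cases hyb : y = b
    · obtain rfl := (firstHit_cons_of_mem (by simp [hyb]) l).1 hl
      simpa [pathProb] using hP0 x hx y
    by_cases hyV : y ∈ V
    · exact mul_nonneg (hP0 x hx y) (ih hyV ((firstHit_cons_of_notMem (by simp [hyb]) l).1 hl))
    · rw [hPz x hx y (by simp [hyb, hyV]), zero_mul]

lemma mem_of_firstHit_of_pathProb_ne_zero (hPz : ∀ x ∈ V, ∀ y ∉ insert b V, P x y = 0)
    {l : List S} : ∀ {x}, x ∈ V → FirstHit ∅ {b} l → pathProb P x l ≠ 0 →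
      ∀ y ∈ l, y ∈ insert b V := by
  induction l with
  | nil => simp
  | cons y l ih =>
    intro x hx hl hp
    rw [pathProb] at hp
    have hy : y ∈ insert b V := by_contra fun h => left_ne_zero_of_mul hp (hPz x hx y h)
    rcases mem_insert.1 hy with rfl | hyV
    · obtain rfl := (firstHit_cons_of_mem (by simp) l).1 hl
      simp
    by_cases hyb : y = b
    · obtain rfl := (firstHit_cons_of_mem (by simp [hyb]) l).1 hl
      simp [hyV]
    · exact List.forall_mem_cons.2
        ⟨hy, ih hyV ((firstHit_cons_of_notMem (by simp [hyb]) l).1 hl) (right_ne_zero_of_mul hp)⟩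

variable (P V b) in
/-- The truncated expectation `𝔼_x[φ(τ_b); τ_b ≤ n]` for a chain that lives on `V` until it
reaches `b`. -/
def hitSum (φ : ℕ → ℝ) (n : ℕ) (x : S) : ℝ :=
  ∑ l ∈ listsUpTo (insert b V) n, if FirstHit ∅ {b} l then φ l.length * pathProb P x l else 0

lemma hitSum_zero (φ : ℕ → ℝ) (x : S) : hitSum P V b φ 0 x = 0 := by
  simp [hitSum, listsUpTo, FirstHit]

lemma hitSum_succ (hb : b ∉ V) (φ : ℕ → ℝ) (n : ℕ) (x : S) :
    hitSum P V b φ (n + 1) x =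
      φ 1 * P x b + ∑ y ∈ V, P x y * hitSum P V b (fun k => φ (k + 1)) n y := by
  rw [hitSum, sum_listsUpTo_succ, sum_insert hb, FirstHit, if_neg not_false, zero_add]
  congr 1
  · simp [firstHit_cons_of_mem, pathProb, mem_listsUpTo]
  · refine sum_congr rfl fun y hy => ?_
    have hyb : y ∉ ({b} : Set S) := fun h => hb (Set.mem_singleton_iff.1 h ▸ hy)
    rw [hitSum, mul_sum]
    refine sum_congr rfl fun l _ => ?_
    rw [firstHit_cons_of_notMem hyb, pathProb, List.length_cons, mul_ite, mul_zero]
    congr 1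
    ring

lemma hitSum_add (φ ψ : ℕ → ℝ) (n : ℕ) (x : S) :
    hitSum P V b (fun k => φ k + ψ k) n x = hitSum P V b φ n x + hitSum P V b ψ n x := by
  rw [hitSum, hitSum, hitSum, ← sum_add_distrib]
  refine sum_congr rfl fun l _ => ?_
  split_ifs <;> ring

lemma abs_le_pow_mul_of_eq_sum {T : S → ℝ} {w : ℕ → S → ℝ} {ρ : ℝ} (hρ : 0 ≤ ρ)
    (hP0 : ∀ x ∈ V, ∀ y, 0 ≤ P x y) (hPT : ∀ x ∈ V, ∑ y ∈ V, P x y * T y ≤ ρ * T x)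
    (hw0 : ∀ x ∈ V, |w 0 x| ≤ T x) (hw : ∀ n, ∀ x ∈ V, w (n + 1) x = ∑ y ∈ V, P x y * w n y)
    (n : ℕ) : ∀ x ∈ V, |w n x| ≤ ρ ^ n * T x := by
  induction n with
  | zero => simpa using hw0
  | succ n ih =>
    intro x hx
    calc |w (n + 1) x| ≤ ∑ y ∈ V, P x y * |w n y| := by
          rw [hw n x hx]
          refine (abs_sum_le_sum_abs _ _).trans_eq (sum_congr rfl fun y _ => ?_)
          rw [abs_mul, abs_of_nonneg (hP0 x hx y)]
      _ ≤ ∑ y ∈ V, P x y * (ρ ^ n * T y) := by gcongr with y hy; exacts [hP0 x hx y, ih y hy]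
      _ = ρ ^ n * ∑ y ∈ V, P x y * T y := by rw [mul_sum]; exact sum_congr rfl fun y _ => by ring
      _ ≤ ρ ^ (n + 1) * T x := by
          rw [pow_succ, mul_assoc]
          exact mul_le_mul_of_nonneg_left (hPT x hx) (pow_nonneg hρ n)

lemma exists_contraction_of_poisson {T : S → ℝ} (hT0 : ∀ x ∈ V, 0 ≤ T x)
    (hT : ∀ x ∈ V, T x = 1 + ∑ y ∈ V, P x y * T y) :
    ∃ ρ : ℝ, 0 ≤ ρ ∧ ρ < 1 ∧ ∀ x ∈ V, ∑ y ∈ V, P x y * T y ≤ ρ * T x := by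
  set M : ℝ := 1 + ∑ y ∈ V, T y
  have hM1 : 1 ≤ M := le_add_of_nonneg_right (sum_nonneg hT0)
  refine ⟨1 - M⁻¹, by simpa using inv_le_one_of_one_le₀ hM1, by simpa using hM1.trans_lt' one_pos,
    fun x hx => ?_⟩
  have hTM : M⁻¹ * T x ≤ 1 := by
    rw [inv_mul_le_one₀ (by linarith)]
    linarith [single_le_sum hT0 hx]
  linarith [hT x hx]

lemma hitSum_one_succ (hb : b ∉ V) (n : ℕ) (x : S) :
    hitSum P V b (fun _ => 1) (n + 1) x =
      P x b + ∑ y ∈ V, P x y * hitSum P V b (fun _ => 1) n y := by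
  rw [hitSum_succ hb, one_mul]

lemma abs_one_sub_hitSum_le {T : S → ℝ} {ρ : ℝ} (hρ : 0 ≤ ρ) (hb : b ∉ V)
    (hP0 : ∀ x ∈ V, ∀ y, 0 ≤ P x y) (hrow : ∀ x ∈ V, P x b + ∑ y ∈ V, P x y = 1)
    (hPT : ∀ x ∈ V, ∑ y ∈ V, P x y * T y ≤ ρ * T x) (hT1 : ∀ x ∈ V, 1 ≤ T x) (n : ℕ) :
    ∀ x ∈ V, |1 - hitSum P V b (fun _ => 1) n x| ≤ ρ ^ n * T x := by
  revert n
  refine abs_le_pow_mul_of_eq_sum hρ hP0 hPT (fun x hx => ?_) fun n x hx => ?_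
  · rw [hitSum_zero, sub_zero, abs_one]
    exact hT1 x hx
  · simp only [hitSum_one_succ hb, mul_sub, sum_sub_distrib, mul_one]
    linarith [hrow x hx]

-- The defect `T - A_n - n (1 - G_n)` solves the same recursion as the survival probability.
lemma abs_sub_hitSum_sub_le {T : S → ℝ} {ρ : ℝ} (hρ : 0 ≤ ρ) (hb : b ∉ V)
    (hP0 : ∀ x ∈ V, ∀ y, 0 ≤ P x y) (hrow : ∀ x ∈ V, P x b + ∑ y ∈ V, P x y = 1)
    (hPT : ∀ x ∈ V, ∑ y ∈ V, P x y * T y ≤ ρ * T x) (hT0 : ∀ x ∈ V, 0 ≤ T x)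
    (hT : ∀ x ∈ V, T x = 1 + ∑ y ∈ V, P x y * T y) (n : ℕ) :
    ∀ x ∈ V, |T x - hitSum P V b (fun k => k) n x - n * (1 - hitSum P V b (fun _ => 1) n x)| ≤
      ρ ^ n * T x := by
  revert n
  refine abs_le_pow_mul_of_eq_sum hρ hP0 hPT (fun x hx => ?_) fun n x hx => ?_
  · simp [hitSum_zero, abs_of_nonneg (hT0 x hx)]
  · rw [hitSum_one_succ hb, hitSum_succ hb]
    simp only [Nat.cast_one, one_mul, Nat.cast_add, hitSum_add, mul_add, mul_sub, mul_one,
      mul_left_comm (P x _) (n : ℝ), sum_add_distrib, sum_sub_distrib, ← mul_sum, ← sum_mul]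
    linear_combination hT x hx + n * hrow x hx

lemma tendsto_hitSum_of_poisson (hb : b ∉ V) (hP0 : ∀ x ∈ V, ∀ y, 0 ≤ P x y)
    (hrow : ∀ x ∈ V, P x b + ∑ y ∈ V, P x y = 1) {T : S → ℝ} (hT0 : ∀ x ∈ V, 0 ≤ T x)
    (hT : ∀ x ∈ V, T x = 1 + ∑ y ∈ V, P x y * T y) {x : S} (hx : x ∈ V) :
    Tendsto (fun n => hitSum P V b (fun k => k) n x) atTop (𝓝 (T x)) := by
  obtain ⟨ρ, hρ0, hρ1, hPT⟩ := exists_contraction_of_poisson hT0 hT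
  have hT1 : ∀ y ∈ V, 1 ≤ T y := fun y hy => (hT y hy).symm ▸
    le_add_of_nonneg_right (sum_nonneg fun z hz => mul_nonneg (hP0 y hy z) (hT0 z hz))
  have hlim : Tendsto (fun n : ℕ => ρ ^ n * T x + n * (ρ ^ n * T x)) atTop (𝓝 0) := by
    have h₁ := (tendsto_pow_atTop_nhds_zero_of_lt_one hρ0 hρ1).mul_const (T x)
    have h₂ := (tendsto_self_mul_const_pow_of_lt_one hρ0 hρ1).mul_const (T x)
    simpa [mul_assoc] using h₁.add h₂
  refine tendsto_iff_norm_sub_tendsto_zero.2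
    (squeeze_zero (fun _ => norm_nonneg _) (fun n => ?_) hlim)
  have hsurv := abs_one_sub_hitSum_le hρ0 hb hP0 hrow hPT hT1 n x hx
  have hdefect := abs_sub_hitSum_sub_le hρ0 hb hP0 hrow hPT hT0 hT n x hx
  set A := hitSum P V b (fun k => k) n x
  set G := hitSum P V b (fun _ => 1) n x
  calc ‖A - T x‖ = |T x - A - n * (1 - G) + n * (1 - G)| := by
        rw [sub_add_cancel, Real.norm_eq_abs, abs_sub_comm]
    _ ≤ |T x - A - n * (1 - G)| + n * |1 - G| :=
        (abs_add_le _ _).trans_eq (by rw [abs_mul, Nat.abs_cast])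
    _ ≤ ρ ^ n * T x + n * (ρ ^ n * T x) := by gcongr

theorem hitTimeExp_eq_of_poisson (hb : b ∉ V) (hP0 : ∀ x ∈ V, ∀ y, 0 ≤ P x y)
    (hPz : ∀ x ∈ V, ∀ y ∉ insert b V, P x y = 0) (hrow : ∀ x ∈ V, P x b + ∑ y ∈ V, P x y = 1)
    {T : S → ℝ} (hT0 : ∀ x ∈ V, 0 ≤ T x) (hT : ∀ x ∈ V, T x = 1 + ∑ y ∈ V, P x y * T y)
    {x : S} (hx : x ∈ V) : hitTimeExp P x {b} = T x := by
  set g : List S → ℝ :=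
    fun l => if FirstHit ∅ {b} l then (l.length : ℝ) * pathProb P x l else 0 with hg
  have hlim : Tendsto (fun n => ∑ l ∈ listsUpTo (insert b V) n, g l) atTop (𝓝 (T x)) :=
    tendsto_hitSum_of_poisson hb hP0 hrow hT0 hT hx
  have hg0 (l) : 0 ≤ g l := by
    simp only [hg]
    split_ifs with hl
    exacts [mul_nonneg l.length.cast_nonneg (pathProb_nonneg_of_firstHit hP0 hPz hx hl), le_rfl]
  have hsupp {l} (hl : g l ≠ 0) : ∀ y ∈ l, y ∈ insert b V := by
    obtain ⟨hfirst, hprob⟩ := ite_ne_right_iff.1 hl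
    exact mem_of_firstHit_of_pathProb_ne_zero hPz hx hfirst (right_ne_zero_of_mul hprob)
  have hmono : Monotone fun n => ∑ l ∈ listsUpTo (insert b V) n, g l := fun m n hmn =>
    sum_le_sum_of_subset_of_nonneg
      (fun l hl => mem_listsUpTo.2 ((mem_listsUpTo.1 hl).imp_left (le_trans · hmn)))
      fun l _ _ => hg0 l
  refine (hasSum_of_isLUB_of_nonneg _ hg0 ⟨?_, fun c hc => ?_⟩).tsum_eq
  · rintro _ ⟨s, rfl⟩
    have hs : ∑ l ∈ s, g l ≤ ∑ l ∈ listsUpTo (insert b V) (s.sup List.length), g l := by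
      rw [← sum_filter_ne_zero]
      refine sum_le_sum_of_subset_of_nonneg (fun l hl => ?_) fun l _ _ => hg0 l
      exact mem_listsUpTo.2 ⟨le_sup (mem_filter.1 hl).1, hsupp (mem_filter.1 hl).2⟩
    exact hs.trans (hmono.ge_of_tendsto hlim _)
  · exact le_of_tendsto' hlim fun n => hc ⟨_, rfl⟩

end HittingTime

section BirthDeath

variable {S : Type*}

/-- The kernel `P` is a birth–death chain along the states `e 0, e 1, …` up to the target `e b`,
with upward rates `u` and downward rates `d`. Nothing is required of `P` outside the rows
`e 0, …, e (b - 1)`. -/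
structure IsBirthDeath (P : S → S → ℝ) (e : ℕ → S) (u d : ℕ → ℝ) (b : ℕ) : Prop where
  injective : Function.Injective e
  up : ∀ k < b, P (e k) (e (k + 1)) = u k
  down : ∀ k, k + 1 < b → P (e (k + 1)) (e k) = d (k + 1)
  hold : ∀ k < b, P (e k) (e k) = 1 - u k - d k
  eq_zero : ∀ k < b, ∀ y, y ≠ e (k + 1) → y ≠ e k → (∀ j, j + 1 = k → y ≠ e j) → P (e k) y = 0
  up_pos : ∀ k < b, 0 < u k
  down_nonneg : ∀ k < b, 0 ≤ d k
  down_zero : d 0 = 0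
  add_le_one : ∀ k < b, u k + d k ≤ 1

/-- The mean time a birth–death chain with reversible weights `Q` and upward rates `u` takes to step
from `k` to `k + 1`. -/
def meanStepTime (Q u : ℕ → ℝ) (k : ℕ) : ℝ := ∑ j ∈ range (k + 1), Q j / (Q k * u k)

namespace IsBirthDeath

variable {P : S → S → ℝ} {e : ℕ → S} {u d Q : ℕ → ℝ} {b : ℕ}

lemma apply_eq (hP : IsBirthDeath P e u d b) {k : ℕ} (hk : k < b) (j : ℕ) :
    P (e k) (e j) = (if j = k + 1 then u k else 0) + (if j + 1 = k then d k else 0) +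
      if j = k then 1 - u k - d k else 0 := by
  rcases eq_or_ne j (k + 1) with rfl | h₁
  · simp [hP.up k hk]; omega
  rcases eq_or_ne j k with rfl | h₂
  · simp [hP.hold j hk]
  by_cases h₃ : j + 1 = k
  · subst h₃
    simp [hP.down j hk]; omega
  · rw [if_neg h₁, if_neg h₂, if_neg h₃, add_zero, add_zero]
    exact hP.eq_zero k hk _ (hP.injective.ne h₁) (hP.injective.ne h₂)
      fun i hi => hP.injective.ne fun hji => h₃ (hji ▸ hi)

lemma apply_nonneg (hP : IsBirthDeath P e u d b) {k : ℕ} (hk : k < b) (y : S) :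
    0 ≤ P (e k) y := by
  by_cases hy : ∃ j, e j = y
  · obtain ⟨j, rfl⟩ := hy
    have hu := (hP.up_pos k hk).le
    have hd := hP.down_nonneg k hk
    have hhold : 0 ≤ 1 - u k - d k := by linarith [hP.add_le_one k hk]
    rw [hP.apply_eq hk]
    positivity
  · exact (hP.eq_zero k hk y (fun h => hy ⟨_, h.symm⟩) (fun h => hy ⟨_, h.symm⟩)
      fun j _ h => hy ⟨_, h.symm⟩).ge

lemma sum_apply_mul (hP : IsBirthDeath P e u d b) {k : ℕ} (hk : k < b) (g : ℕ → ℝ) :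
    ∑ j ∈ range (b + 1), P (e k) (e j) * g j =
      u k * g (k + 1) + d k * g (k - 1) + (1 - u k - d k) * g k := by
  simp only [hP.apply_eq hk, add_mul, ite_mul, zero_mul, sum_add_distrib, sum_ite_eq', mem_range]
  rw [if_pos (by omega), if_pos (by omega)]
  congr 2
  cases k with
  | zero => simp [hP.down_zero]
  | succ k =>
    simp only [add_left_inj, sum_ite_eq', mem_range, add_tsub_cancel_right]
    rw [if_pos (by omega)]

lemma up_mul_meanStepTime_sub (hP : IsBirthDeath P e u d b) (hQ : ∀ k < b, 0 < Q k)
    (hbal : ∀ k, k + 1 < b → Q k * u k = Q (k + 1) * d (k + 1)) {k : ℕ} (hk : k < b) :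
    u k * meanStepTime Q u k - d k * meanStepTime Q u (k - 1) = 1 := by
  have hQk := (hQ k hk).ne'
  have huk := (hP.up_pos k hk).ne'
  have hup : u k * meanStepTime Q u k = (∑ j ∈ range k, Q j) / Q k + 1 := by
    rw [meanStepTime, ← sum_div, sum_range_succ]
    field_simp
  have hdown : d k * meanStepTime Q u (k - 1) = (∑ j ∈ range k, Q j) / Q k := by
    cases k with
    | zero => simp [hP.down_zero]
    | succ k =>
      have hdk : d (k + 1) ≠ 0 := by
        have := mul_pos (hQ k (by omega)) (hP.up_pos k (by omega))
        exact right_ne_zero_of_mul (hbal k hk ▸ this.ne')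
      rw [add_tsub_cancel_right, meanStepTime, ← sum_div, hbal k hk]
      field_simp
  linarith

lemma sum_Ico_meanStepTime_eq (hP : IsBirthDeath P e u d b) (hQ : ∀ k < b, 0 < Q k)
    (hbal : ∀ k, k + 1 < b → Q k * u k = Q (k + 1) * d (k + 1)) {k : ℕ} (hk : k < b) :
    ∑ i ∈ Ico k b, meanStepTime Q u i =
      1 + ∑ j ∈ range b, P (e k) (e j) * ∑ i ∈ Ico j b, meanStepTime Q u i := by
  set t : ℕ → ℝ := fun k => ∑ i ∈ Ico k b, meanStepTime Q u i with ht
  have hstep {k} (hk : k < b) : t k = meanStepTime Q u k + t (k + 1) :=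
    sum_eq_sum_Ico_succ_bot hk _
  have hdown : d k * t (k - 1) = d k * (meanStepTime Q u (k - 1) + t k) := by
    cases k with
    | zero => simp [hP.down_zero]
    | succ k => rw [add_tsub_cancel_right, hstep (Nat.lt_of_succ_lt hk)]
  have hsum := hP.sum_apply_mul hk t
  rw [sum_range_succ, show t b = 0 by simp [ht], mul_zero, add_zero] at hsum
  rw [hsum]
  linear_combination u k * hstep hk - hdown + hP.up_mul_meanStepTime_sub hQ hbal hk

theorem hitTimeExp_eq (hP : IsBirthDeath P e u d b) (hQ : ∀ k < b, 0 < Q k)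
    (hbal : ∀ k, k + 1 < b → Q k * u k = Q (k + 1) * d (k + 1)) {a : ℕ} (hab : a < b) :
    hitTimeExp P (e a) {e b} = ∑ k ∈ Ico a b, meanStepTime Q u k := by
  set t : ℕ → ℝ := fun k => ∑ i ∈ Ico k b, meanStepTime Q u i
  set T : S → ℝ := Function.extend e t 0
  set V : Finset S := (range b).map ⟨e, hP.injective⟩ with hV
  have hTe (k) : T (e k) = t k := hP.injective.extend_apply t 0 k
  have hVb : e b ∉ V := by simp [hV]
  have hmem {j} (hj : j ≤ b) : e j ∈ insert (e b) V := by
    rcases hj.eq_or_lt with rfl | hj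
    exacts [mem_insert_self _ _, mem_insert_of_mem (by simp [hV, hj])]
  have hforall {p : S → Prop} (h : ∀ k < b, p (e k)) : ∀ x ∈ V, p x := by simpa [hV] using h
  have haV : e a ∈ V := by simp [hV, hab]
  refine Eq.trans (hitTimeExp_eq_of_poisson hVb (hforall fun k hk => hP.apply_nonneg hk)
    (hforall fun k hk y hy => hP.eq_zero k hk y ?_ ?_ ?_) (hforall fun k hk => ?_)
    (hforall fun k _ => ?_) (hforall fun k hk => ?_) haV) (hTe a)
  · exact fun h => hy (h ▸ hmem hk)
  · exact fun h => hy (h ▸ hmem hk.le)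
  · exact fun j hj h => hy (h ▸ hmem (by omega))
  · have hsum := hP.sum_apply_mul hk 1
    simp only [sum_range_succ, Pi.one_apply, mul_one] at hsum
    rw [hV, sum_map, Function.Embedding.coeFn_mk]
    linarith
  · rw [hTe]
    exact sum_nonneg fun i hi => sum_nonneg fun j hj => by
      rw [mem_Ico] at hi
      rw [mem_range] at hj
      have := hQ j (by omega)
      have := mul_pos (hQ i hi.2) (hP.up_pos i hi.2)
      positivity
  · simp only [hV, sum_map, Function.Embedding.coeFn_mk, hTe]
    exact hP.sum_Ico_meanStepTime_eq hQ hbal hk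

end IsBirthDeath

end BirthDeath

section Lattice

/-- The point `-1 + 2k/N` of `Γ_N`: the magnetisation with exactly `k` of the `N` spins up. -/
def latticePt (N k : ℕ) : ℝ := -1 + 2 * k / N

lemma latticePt_succ (N k : ℕ) : latticePt N (k + 1) = latticePt N k + 2 / N := by
  unfold latticePt; push_cast; ring

lemma latticePt_strictMono {N : ℕ} (hN : 0 < N) : StrictMono (latticePt N) :=
  strictMono_nat_of_lt_succ fun k => by
    rw [latticePt_succ]
    exact lt_add_of_pos_right _ (by positivity)

lemma latticePt_self {N : ℕ} (hN : 0 < N) : latticePt N N = 1 := by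
  unfold latticePt; field_simp; ring

lemma neg_one_le_latticePt (N k : ℕ) : -1 ≤ latticePt N k :=
  le_add_of_nonneg_right (by positivity)

lemma half_one_sub_latticePt {N : ℕ} (hN : 0 < N) (k : ℕ) :
    (1 - latticePt N k) / 2 = (N - k) / N := by
  unfold latticePt; field_simp; ring

lemma half_one_add_latticePt (N k : ℕ) : (1 + latticePt N k) / 2 = k / N := by
  unfold latticePt; ring

lemma mag_eq_latticePt {N : ℕ} (hN : 0 < N) (σ : Conf N) :
    mag σ = latticePt N #{i | σ i = true} := by
  have hspin (i) : spin (σ i) = 2 * (if σ i = true then 1 else 0) - 1 := by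
    unfold spin; split_ifs <;> norm_num
  simp only [mag, hspin, sum_sub_distrib, ← mul_sum, latticePt]
  simp
  field_simp
  ring

lemma mem_Gamma_iff {N : ℕ} (hN : 0 < N) {y : ℝ} : y ∈ Gamma N ↔ ∃ k ≤ N, latticePt N k = y := by
  constructor
  · rintro ⟨σ, rfl⟩
    exact ⟨_, by simpa using card_le_univ {i | σ i = true}, (mag_eq_latticePt hN σ).symm⟩
  · rintro ⟨k, hk, rfl⟩
    exact ⟨fun i => decide (i.val < k), by
      simp [mag_eq_latticePt hN, Fin.card_filter_val_lt, hk]⟩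

lemma abs_sub_le_of_closestIn_Gamma {N : ℕ} (hN : 0 < N) {m y : ℝ} (hm : m ∈ Set.Icc (-1) 1)
    (hy : ClosestIn (Gamma N) m y) : |m - y| ≤ 2 / N := by
  set z : ℝ := N * (1 + m) / 2 with hz
  have hz0 : 0 ≤ z := div_nonneg (mul_nonneg N.cast_nonneg (by linarith [hm.1])) zero_le_two
  have hzN : ⌊z⌋₊ ≤ N := Nat.floor_le_of_le (by
    have : (N : ℝ) * (1 + m) ≤ N * 2 := by gcongr; linarith [hm.2]
    linarith)
  have hsub : m - latticePt N ⌊z⌋₊ = (z - ⌊z⌋₊) * (2 / N) := by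
    unfold latticePt; rw [hz]; field_simp; ring
  calc |m - y| ≤ |m - latticePt N ⌊z⌋₊| := hy.2 _ ((mem_Gamma_iff hN).2 ⟨_, hzN, rfl⟩)
    _ = (z - ⌊z⌋₊) * (2 / N) := by
        rw [hsub, abs_of_nonneg (mul_nonneg (sub_nonneg.2 (Nat.floor_le hz0)) (by positivity))]
    _ ≤ 1 * (2 / N) := by gcongr; linarith [Nat.lt_floor_add_one z]
    _ = 2 / N := one_mul _

lemma tendsto_two_div_natCast : Tendsto (fun N : ℕ => (2 : ℝ) / N) atTop (𝓝 0) :=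
  tendsto_const_nhds.div_atTop tendsto_natCast_atTop_atTop

lemma tendsto_of_closestIn_Gamma {m : ℝ} (hm : m ∈ Set.Icc (-1) 1) {y : ℕ → ℝ}
    (hy : ∀ N, ClosestIn (Gamma N) m (y N)) : Tendsto y atTop (𝓝 m) := by
  refine tendsto_iff_norm_sub_tendsto_zero.2
    (squeeze_zero' (.of_forall fun _ => norm_nonneg _) ?_ tendsto_two_div_natCast)
  filter_upwards [eventually_gt_atTop 0] with N hN
  rw [Real.norm_eq_abs, abs_sub_comm]
  exact abs_sub_le_of_closestIn_Gamma hN hm (hy N)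

end Lattice

section CurieWeissChain

variable {N : ℕ} {β h : ℝ}

/-- The probability that the Curie–Weiss chain steps from `m` to `m + 2/N`. -/
def upRate (N : ℕ) (β h m : ℝ) : ℝ :=
  Real.exp (-β * N * max (Em h (m + 2 / N) - Em h m) 0) * ((1 - m) / 2)

/-- The probability that the Curie–Weiss chain steps from `m` to `m - 2/N`. -/
def downRate (N : ℕ) (β h m : ℝ) : ℝ :=
  Real.exp (-β * N * max (Em h (m - 2 / N) - Em h m) 0) * ((1 + m) / 2)

/-- The reversible weight of the `k`-th lattice point: `exp (-β N E)` times the number of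
configurations with `k` spins up. -/
def gibbsWeight (N : ℕ) (β h : ℝ) (k : ℕ) : ℝ :=
  N.choose k * Real.exp (-β * N * Em h (latticePt N k))

lemma gibbsWeight_pos (β h : ℝ) {k : ℕ} (hk : k ≤ N) : 0 < gibbsWeight N β h k :=
  mul_pos (by exact_mod_cast Nat.choose_pos hk) (Real.exp_pos _)

lemma choose_mul_half_one_sub_latticePt {k : ℕ} (hk : k < N) :
    N.choose k * ((1 - latticePt N k) / 2) =
      N.choose (k + 1) * ((1 + latticePt N (k + 1)) / 2) := by
  have hchoose : (N.choose (k + 1) : ℝ) * (k + 1 : ℕ) = N.choose k * (N - k) := by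
    rw [← Nat.cast_sub hk.le]
    exact_mod_cast N.choose_succ_right_eq k
  rw [half_one_sub_latticePt (by omega), half_one_add_latticePt, mul_div_assoc', mul_div_assoc',
    hchoose]

lemma exp_mul_exp_max_comm (c A B : ℝ) :
    Real.exp (c * A) * Real.exp (c * max (B - A) 0) =
      Real.exp (c * B) * Real.exp (c * max (A - B) 0) := by
  rw [← Real.exp_add, ← Real.exp_add, ← mul_add, ← mul_add, add_comm A, add_comm B, max_add,
    max_add, sub_add_cancel, sub_add_cancel, zero_add, zero_add, max_comm]

lemma gibbsWeight_mul_upRate (β h : ℝ) {k : ℕ} (hk : k < N) :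
    gibbsWeight N β h k * upRate N β h (latticePt N k) =
      gibbsWeight N β h (k + 1) * downRate N β h (latticePt N (k + 1)) := by
  rw [upRate, downRate, ← latticePt_succ, ← eq_sub_of_add_eq (latticePt_succ N k).symm,
    gibbsWeight, gibbsWeight]
  have hexp := exp_mul_exp_max_comm (-β * N) (Em h (latticePt N k)) (Em h (latticePt N (k + 1)))
  linear_combination N.choose k * ((1 - latticePt N k) / 2) * hexp +
    Real.exp (-β * N * Em h (latticePt N (k + 1))) *
      Real.exp (-β * N * max (Em h (latticePt N k) - Em h (latticePt N (k + 1))) 0) *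
        choose_mul_half_one_sub_latticePt hk

lemma upRate_add_downRate_le_one (hβ : 0 ≤ β) {m : ℝ} (hm : m ∈ Set.Icc (-1) 1) :
    upRate N β h m + downRate N β h m ≤ 1 := by
  have hexp (z : ℝ) : Real.exp (-β * N * max z 0) ≤ 1 := by
    rw [Real.exp_le_one_iff, neg_mul, neg_mul, neg_nonpos]
    positivity
  have hup : upRate N β h m ≤ 1 * ((1 - m) / 2) :=
    mul_le_mul_of_nonneg_right (hexp _) (by linarith [hm.2])
  have hdown : downRate N β h m ≤ 1 * ((1 + m) / 2) :=
    mul_le_mul_of_nonneg_right (hexp _) (by linarith [hm.1])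
  linarith

lemma isBirthDeath_rCW (hβ : 0 ≤ β) {b : ℕ} (hN : 0 < N) (hb : b ≤ N) :
    IsBirthDeath (rCW N β h) (latticePt N) (fun k => upRate N β h (latticePt N k))
      (fun k => downRate N β h (latticePt N k)) b := by
  have hN' : (0 : ℝ) < 2 / N := by positivity
  have hmono := latticePt_strictMono hN
  have hlt {k} (hk : k < b) : latticePt N k < 1 :=
    latticePt_self hN ▸ hmono (hk.trans_le hb)
  exact
  { injective := hmono.injective
    up k _ := by rw [latticePt_succ, rCW, if_pos rfl, upRate]
    down k _ := by
      rw [eq_sub_of_add_eq (latticePt_succ N k).symm, rCW, if_neg (by linarith), if_pos rfl,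
        downRate]
    hold k _ := by
      rw [rCW, if_neg (by linarith), if_neg (by linarith), if_pos rfl, upRate, downRate]
    eq_zero k _ y hup hhold hdown := by
      rw [rCW, if_neg (latticePt_succ N k ▸ hup), if_neg hhold, ite_eq_right_iff]
      rintro rfl
      cases k with
      | zero => simp [latticePt]
      | succ k => exact absurd (eq_sub_of_add_eq (latticePt_succ N k).symm).symm (hdown k rfl)
    up_pos k hk := mul_pos (Real.exp_pos _) (by linarith [hlt hk])
    down_nonneg k _ := mul_nonneg (Real.exp_nonneg _) (by linarith [neg_one_le_latticePt N k])
    down_zero := by simp [downRate, latticePt]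
    add_le_one k hk := upRate_add_downRate_le_one hβ ⟨neg_one_le_latticePt N k, (hlt hk).le⟩ }

theorem hitTimeExp_rCW (hβ : 0 ≤ β) {a b : ℕ} (hab : a < b) (hb : b ≤ N) :
    hitTimeExp (rCW N β h) (latticePt N a) {latticePt N b} =
      ∑ k ∈ Ico a b, meanStepTime (gibbsWeight N β h) (fun k => upRate N β h (latticePt N k)) k :=
  (isBirthDeath_rCW hβ (by omega) hb).hitTimeExp_eq
    (fun _ hk => gibbsWeight_pos β h (by omega))
    (fun _ hk => gibbsWeight_mul_upRate β h (by omega)) hab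

lemma upRate_eq (hN : 0 < N) (β h m : ℝ) :
    upRate N β h m = Real.exp (-β * max (-2 * (m + h) - 2 / N) 0) * ((1 - m) / 2) := by
  have hN' : (N : ℝ) ≠ 0 := by positivity
  have hstep : (N : ℝ) * (Em h (m + 2 / N) - Em h m) = -2 * (m + h) - 2 / N := by
    unfold Em; field_simp; ring
  rw [upRate, mul_assoc, mul_max_of_nonneg _ _ N.cast_nonneg, hstep, mul_zero]

lemma le_upRate (hβ : 0 ≤ β) (hN : 0 < N) {m q : ℝ} (hm : -1 ≤ m) (hmq : m ≤ q) (hq : q ≤ 1) :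
    Real.exp (-β * (2 * (1 + |h|))) * ((1 - q) / 2) ≤ upRate N β h m := by
  have hmax : max (-2 * (m + h) - 2 / N) 0 ≤ 2 * (1 + |h|) := by
    have : (0 : ℝ) ≤ 2 / N := by positivity
    exact max_le (by linarith [neg_abs_le h]) (by positivity)
  rw [upRate_eq hN, neg_mul, neg_mul]
  gcongr

lemma tendsto_upRate (β h : ℝ) {m : ℕ → ℝ} {s : ℝ} (hm : Tendsto m atTop (𝓝 s)) :
    Tendsto (fun N => upRate N β h (m N)) atTop
      (𝓝 (Real.exp (-β * max (-2 * (s + h)) 0) * ((1 - s) / 2))) := by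
  have hlim : Tendsto (fun N : ℕ => Real.exp (-β * max (-2 * (m N + h) - 2 / N) 0) *
      ((1 - m N) / 2)) atTop (𝓝 (Real.exp (-β * max (-2 * (s + h) - 0) 0) * ((1 - s) / 2))) :=
    (((((hm.add_const h).const_mul (-2)).sub tendsto_two_div_natCast).max
      tendsto_const_nhds).const_mul (-β)).rexp.mul ((hm.const_sub 1).div_const 2)
  rw [sub_zero] at hlim
  refine hlim.congr' ?_
  filter_upwards [eventually_gt_atTop 0] with N hN
  rw [upRate_eq hN]

end CurieWeissChain

section StepFunction

variable {τ c : ℕ → ℝ} {n : ℕ}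

/-- The step function with value `c k` on `[τ k, τ (k + 1))` for `k < n`, and `0` elsewhere. -/
def stepFun (τ c : ℕ → ℝ) (n : ℕ) (t : ℝ) : ℝ :=
  ∑ k ∈ range n, (Set.Ico (τ k) (τ (k + 1))).indicator (fun _ => c k) t

lemma stepFun_of_mem (hτ : Monotone τ) {k : ℕ} (hk : k < n) {t : ℝ}
    (ht : t ∈ Set.Ico (τ k) (τ (k + 1))) : stepFun τ c n t = c k := by
  rw [stepFun, sum_eq_single_of_mem k (mem_range.2 hk), Set.indicator_of_mem ht]
  intro j _ hjk
  have hdisj := hτ.pairwise_disjoint_on_Ico_succ hjk.symm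
  exact Set.indicator_of_notMem (Set.disjoint_left.1 hdisj ht) _

lemma stepFun_of_forall_notMem {t : ℝ} (ht : ∀ k < n, t ∉ Set.Ico (τ k) (τ (k + 1))) :
    stepFun τ c n t = 0 :=
  sum_eq_zero fun k hk => Set.indicator_of_notMem (ht k (mem_range.1 hk)) _

lemma measurable_stepFun : Measurable (stepFun τ c n) :=
  Finset.measurable_fun_sum _ fun _ _ => measurable_const.indicator measurableSet_Ico

lemma integral_stepFun (hτ : Monotone τ) :
    ∫ t, stepFun τ c n t = ∑ k ∈ range n, (τ (k + 1) - τ k) * c k := by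
  unfold stepFun
  rw [integral_finsetSum]
  · refine sum_congr rfl fun k _ => ?_
    rw [integral_indicator_const _ measurableSet_Ico, Real.volume_real_Ico_of_le (hτ k.le_succ),
      smul_eq_mul]
  · exact fun k _ => (integrable_indicator_iff measurableSet_Ico).2 (integrableOn_const (by simp))

end StepFunction

section LatticeLaplace

variable {m : ℝ} {k : ℕ → ℕ} {t : ℝ}

/-- The lattice point `latticePt N k` in the coordinate of order `√N` centred at `m`. -/
def scaledPt (m : ℝ) (N k : ℕ) : ℝ := √N * (latticePt N k - m)

lemma scaledPt_sq (m : ℝ) (N k : ℕ) : scaledPt m N k ^ 2 = N * (latticePt N k - m) ^ 2 := by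
  rw [scaledPt, mul_pow, Real.sq_sqrt N.cast_nonneg]

lemma scaledPt_succ (m : ℝ) (N k : ℕ) : scaledPt m N (k + 1) = scaledPt m N k + 2 / √N := by
  rw [scaledPt, scaledPt, latticePt_succ, add_sub_right_comm, mul_add, mul_div_left_comm,
    Real.sqrt_div_self']
  ring

lemma monotone_scaledPt (m : ℝ) (N : ℕ) : Monotone (scaledPt m N) :=
  monotone_nat_of_le_succ fun k => by
    rw [scaledPt_succ]
    exact le_add_of_nonneg_right (by positivity)

lemma tendsto_sqrt_natCast : Tendsto (fun N : ℕ => √N) atTop atTop :=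
  Real.tendsto_sqrt_atTop.comp tendsto_natCast_atTop_atTop

lemma tendsto_latticePt_of_scaledPt (hk : Tendsto (fun N => scaledPt m N (k N)) atTop (𝓝 t)) :
    Tendsto (fun N => latticePt N (k N)) atTop (𝓝 m) := by
  have hlim := (hk.div_atTop tendsto_sqrt_natCast).add_const m
  rw [zero_add] at hlim
  refine hlim.congr' ?_
  filter_upwards [eventually_gt_atTop 0] with N hN
  rw [scaledPt, mul_div_cancel_left₀ _ (by positivity), sub_add_cancel]

lemma eventually_le_of_tendsto_latticePt (hm : m < 1)
    (hk : Tendsto (fun N => latticePt N (k N)) atTop (𝓝 m)) : ∀ᶠ N in atTop, k N ≤ N := by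
  filter_upwards [hk.eventually_lt_const hm, eventually_gt_atTop 0] with N hkN hN
  rw [← latticePt_self hN] at hkN
  exact ((latticePt_strictMono hN).lt_iff_lt.1 hkN).le

lemma tendsto_scaledPt_of_mem_Ico
    (hk : ∀ᶠ N in atTop, t ∈ Set.Ico (scaledPt m N (k N)) (scaledPt m N (k N + 1))) :
    Tendsto (fun N => scaledPt m N (k N)) atTop (𝓝 t) := by
  have hlower : Tendsto (fun N : ℕ => t - 2 / √N) atTop (𝓝 t) := by
    simpa using tendsto_const_nhds.sub (tendsto_const_nhds.div_atTop tendsto_sqrt_natCast)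
  refine tendsto_of_tendsto_of_tendsto_of_le_of_le' hlower tendsto_const_nhds ?_ ?_
  · filter_upwards [hk] with N hN
    rw [scaledPt_succ] at hN
    linarith [hN.2]
  · exact hk.mono fun N hN => hN.1

lemma exists_eventually_mem_Ico_scaledPt (hm : -1 < m) (t : ℝ) :
    ∃ k : ℕ → ℕ, ∀ᶠ N in atTop, t ∈ Set.Ico (scaledPt m N (k N)) (scaledPt m N (k N + 1)) := by
  set z : ℕ → ℝ := fun N => √N * (√N * (1 + m) + t) / 2 with hz
  refine ⟨fun N => ⌊z N⌋₊, ?_⟩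
  have hpos : ∀ᶠ N : ℕ in atTop, 0 ≤ √N * (1 + m) + t :=
    (tendsto_atTop_add_const_right _ t (tendsto_sqrt_natCast.atTop_mul_const
      (by linarith : 0 < 1 + m))).eventually_ge_atTop 0
  filter_upwards [hpos, eventually_gt_atTop 0] with N hN hN0
  have hs : 0 < √(N : ℝ) := by positivity
  have hscaled (k : ℕ) : scaledPt m N k = t + (k - z N) * (2 / √N) := by
    have hdiv : √(N : ℝ) / N = 1 / √N := Real.sqrt_div_self'
    have hmul : √(N : ℝ) * (1 / √N) = 1 := mul_one_div_cancel hs.ne'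
    rw [scaledPt, latticePt, hz]
    linear_combination (2 * k : ℝ) * hdiv + (√N * (1 + m) + t) * hmul
  have hz0 : 0 ≤ z N := by positivity
  have hmesh : 0 < 2 / √(N : ℝ) := by positivity
  rw [Set.mem_Ico, hscaled, hscaled]
  constructor
  · have := mul_nonneg (sub_nonneg.2 (Nat.floor_le hz0)) hmesh.le
    linarith
  · have := mul_pos (sub_pos.2 (Nat.lt_floor_add_one (z N))) hmesh
    push_cast
    linarith

lemma abs_stepFun_scaledPt_le {N : ℕ} (hN : 0 < N) {b : ℕ → ℝ} {K c : ℝ} (hK : 0 ≤ K) (hc : 0 ≤ c)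
    (hb : ∀ k ≤ N, |b k| ≤ K * Real.exp (-c * (N * (latticePt N k - m) ^ 2))) (t : ℝ) :
    |stepFun (scaledPt m N) b (N + 1) t| ≤ K * Real.exp (4 * c) * Real.exp (-(c / 2) * t ^ 2) := by
  by_cases hcell : ∃ k < N + 1, t ∈ Set.Ico (scaledPt m N k) (scaledPt m N (k + 1))
  · obtain ⟨k, hk, hkt⟩ := hcell
    rw [stepFun_of_mem (monotone_scaledPt m N) hk hkt]
    refine (hb k (Nat.lt_succ_iff.1 hk)).trans ?_
    rw [← scaledPt_sq, mul_assoc, ← Real.exp_add]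
    have hmesh : 2 / √(N : ℝ) ≤ 2 :=
      div_le_self zero_le_two (Real.one_le_sqrt.2 (by exact_mod_cast hN))
    rw [scaledPt_succ] at hkt
    have hsq : t ^ 2 ≤ 2 * scaledPt m N k ^ 2 + 8 := by
      have : (t - scaledPt m N k) ^ 2 ≤ 2 ^ 2 :=
        pow_le_pow_left₀ (by linarith [hkt.1]) (by linarith [hkt.2]) 2
      linarith [add_sq_le (a := scaledPt m N k) (b := t - scaledPt m N k),
        congrArg (· ^ 2) (add_sub_cancel (scaledPt m N k) t)]
    gcongr
    nlinarith
  · push Not at hcell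
    rw [stepFun_of_forall_notMem hcell, abs_zero]
    positivity

theorem tendsto_sum_of_gaussian_bound (hm : m ∈ Set.Ioo (-1) 1) {a : ℕ → ℕ → ℝ} {K c : ℝ}
    (hK : 0 ≤ K) (hc : 0 < c)
    (ha : ∀ᶠ N : ℕ in atTop, ∀ k ≤ N, |a N k| ≤ K * Real.exp (-c * (N * (latticePt N k - m) ^ 2)))
    {G : ℝ → ℝ} (hG : ∀ (t : ℝ) (k : ℕ → ℕ),
      Tendsto (fun N => scaledPt m N (k N)) atTop (𝓝 t) →
        Tendsto (fun N => a N (k N)) atTop (𝓝 (G t))) :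
    Tendsto (fun N : ℕ => (√N)⁻¹ * ∑ k ∈ range (N + 1), a N k) atTop (𝓝 (1 / 2 * ∫ t, G t)) := by
  have hint : Tendsto (fun N => ∫ t, stepFun (scaledPt m N) (a N) (N + 1) t) atTop
      (𝓝 (∫ t, G t)) := by
    refine tendsto_integral_filter_of_dominated_convergence
      (fun t => K * Real.exp (4 * c) * Real.exp (-(c / 2) * t ^ 2))
      (.of_forall fun N => measurable_stepFun.aestronglyMeasurable) ?_
      ((integrable_exp_neg_mul_sq (half_pos hc)).const_mul _) (.of_forall fun t => ?_)
    · filter_upwards [ha, eventually_gt_atTop 0] with N haN hN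
      exact .of_forall fun t => abs_stepFun_scaledPt_le hN hK hc.le haN t
    · obtain ⟨k, hk⟩ := exists_eventually_mem_Ico_scaledPt hm.1 t
      have hkt := tendsto_scaledPt_of_mem_Ico hk
      refine (hG t k hkt).congr' ?_
      filter_upwards [hk,
        eventually_le_of_tendsto_latticePt hm.2 (tendsto_latticePt_of_scaledPt hkt)] with N hkN hkle
      rw [stepFun_of_mem (monotone_scaledPt m N) (Nat.lt_succ_iff.2 hkle) hkN]
  refine (hint.const_mul (1 / 2)).congr fun N => ?_
  simp only [integral_stepFun (monotone_scaledPt m N), scaledPt_succ, add_sub_cancel_left,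
    ← mul_sum]
  ring

lemma exists_sum_gaussian_le (hm : m ∈ Set.Ioo (-1) 1) {c : ℝ} (hc : 0 < c) :
    ∃ B : ℝ, 0 ≤ B ∧ ∀ᶠ N : ℕ in atTop,
      (√N)⁻¹ * ∑ k ∈ range (N + 1), Real.exp (-c * (N * (latticePt N k - m) ^ 2)) ≤ B := by
  have hlim := tendsto_sum_of_gaussian_bound hm zero_le_one hc
    (a := fun N k => Real.exp (-c * (N * (latticePt N k - m) ^ 2)))
    (G := fun t => Real.exp (-c * t ^ 2))
    (.of_forall fun N k _ => by rw [one_mul, Real.abs_exp])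
    fun t k hk => by
      simp only [← scaledPt_sq]
      exact ((hk.pow 2).const_mul _).rexp
  have hlt := hlim.eventually_le_const (lt_add_one _)
  exact ⟨_, by positivity, hlt⟩

theorem tendsto_sum_sum_of_gaussian_bound {n : ℝ} (hm : m ∈ Set.Ioo (-1) 1)
    (hn : n ∈ Set.Ioo (-1) 1) {a : ℕ → ℕ → ℕ → ℝ} {K c : ℝ} (hK : 0 ≤ K) (hc : 0 < c)
    (ha : ∀ᶠ N : ℕ in atTop, ∀ i ≤ N, ∀ j ≤ N, |a N i j| ≤
      K * Real.exp (-c * (N * ((latticePt N i - m) ^ 2 + (latticePt N j - n) ^ 2))))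
    {G : ℝ → ℝ → ℝ} (hG : ∀ (t u : ℝ) (i j : ℕ → ℕ),
      Tendsto (fun N => scaledPt m N (i N)) atTop (𝓝 t) →
        Tendsto (fun N => scaledPt n N (j N)) atTop (𝓝 u) →
          Tendsto (fun N => a N (i N) (j N)) atTop (𝓝 (G t u))) :
    Tendsto (fun N : ℕ => (N : ℝ)⁻¹ * ∑ i ∈ range (N + 1), ∑ j ∈ range (N + 1), a N i j) atTop
      (𝓝 (1 / 2 * ∫ t, 1 / 2 * ∫ u, G t u)) := by
  have hexp (N i j : ℕ) :
      K * Real.exp (-c * (N * ((latticePt N i - m) ^ 2 + (latticePt N j - n) ^ 2))) =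
        K * Real.exp (-c * (N * (latticePt N i - m) ^ 2)) *
          Real.exp (-c * (N * (latticePt N j - n) ^ 2)) := by
    rw [mul_assoc, ← Real.exp_add]
    ring_nf
  simp only [hexp] at ha
  obtain ⟨B, hB0, hB⟩ := exists_sum_gaussian_le hn hc
  have houter := tendsto_sum_of_gaussian_bound hm (mul_nonneg hK hB0) hc
    (a := fun N i => (√N)⁻¹ * ∑ j ∈ range (N + 1), a N i j) (G := fun t => 1 / 2 * ∫ u, G t u)
    ?_ fun t i hi => tendsto_sum_of_gaussian_bound hn hK hc ?_ fun u j hj => hG t u i j hi hj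
  · refine houter.congr fun N => ?_
    rw [← mul_sum, ← mul_assoc, ← mul_inv, Real.mul_self_sqrt N.cast_nonneg]
  · filter_upwards [ha, hB] with N haN hBN i hi
    rw [abs_mul, abs_of_nonneg (by positivity)]
    calc (√N)⁻¹ * |∑ j ∈ range (N + 1), a N i j|
        ≤ (√N)⁻¹ * ∑ j ∈ range (N + 1), K * Real.exp (-c * (N * (latticePt N i - m) ^ 2)) *
            Real.exp (-c * (N * (latticePt N j - n) ^ 2)) := by
          gcongr
          exact (abs_sum_le_sum_abs _ _).trans
            (sum_le_sum fun j hj => haN i hi j (Nat.lt_succ_iff.1 (mem_range.1 hj)))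
      _ = K * Real.exp (-c * (N * (latticePt N i - m) ^ 2)) * ((√N)⁻¹ *
            ∑ j ∈ range (N + 1), Real.exp (-c * (N * (latticePt N j - n) ^ 2))) := by
          rw [← mul_sum]; ring
      _ ≤ K * Real.exp (-c * (N * (latticePt N i - m) ^ 2)) * B := by gcongr
      _ = K * B * Real.exp (-c * (N * (latticePt N i - m) ^ 2)) := by ring
  · filter_upwards [ha, eventually_le_of_tendsto_latticePt hm.2 (tendsto_latticePt_of_scaledPt hi)]
      with N haN hi j hj
    refine (haN _ hi j hj).trans ?_
    gcongr
    exact mul_le_of_le_one_right hK (Real.exp_le_one_iff.2 (by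
      rw [neg_mul, neg_nonpos]; positivity))

end LatticeLaplace

section BinomialPeak

variable {N k : ℕ}

/-- The probability that a binomial variable with `N` trials and mean `k` equals its mean; it is
the factor `exp (-N I)` leaves out of the binomial coefficient `N.choose k`. -/
def binomAtMean (N k : ℕ) : ℝ := N.choose k * ((k / N) ^ k * ((N - k) / N) ^ (N - k))

lemma exp_natCast_mul_log {k : ℕ} {x : ℝ} (hx : k ≠ 0 → 0 < x) :
    Real.exp (k * Real.log x) = x ^ k := by
  rcases eq_or_ne k 0 with rfl | hk
  · simp
  · rw [Real.exp_nat_mul, Real.exp_log (hx hk)]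

lemma exp_mul_Ient (hk : k ≤ N) :
    Real.exp (N * Ient (latticePt N k)) = (k / N) ^ k * ((N - k) / N) ^ (N - k) := by
  rcases N.eq_zero_or_pos with rfl | hN
  · simp [Nat.le_zero.1 hk]
  have hup : Real.exp (k * Real.log (k / N)) = ((k : ℝ) / N) ^ k :=
    exp_natCast_mul_log fun hk0 => by positivity
  have hdown : Real.exp ((N - k : ℕ) * Real.log ((N - k) / N)) = (((N : ℝ) - k) / N) ^ (N - k) :=
    exp_natCast_mul_log fun hk0 => by
      rw [← Nat.cast_sub hk]
      positivity
  rw [Ient, half_one_add_latticePt, half_one_sub_latticePt hN, ← hup, ← hdown, ← Real.exp_add,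
    Nat.cast_sub hk]
  congr 1
  field_simp
  ring

lemma gibbsWeight_eq {β : ℝ} (hβ : β ≠ 0) (h : ℝ) (hk : k ≤ N) :
    gibbsWeight N β h k = binomAtMean N k * Real.exp (-β * N * fE β h (latticePt N k)) := by
  rw [gibbsWeight, binomAtMean, ← exp_mul_Ient hk, mul_assoc _ (Real.exp _), ← Real.exp_add,
    fE]
  congr 2
  field_simp
  ring

lemma binomAtMean_nonneg (hk : k ≤ N) : 0 ≤ binomAtMean N k := by
  rw [binomAtMean, ← Nat.cast_sub hk]
  positivity

lemma binomAtMean_le_one (hk : k ≤ N) : binomAtMean N k ≤ 1 := by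
  rcases N.eq_zero_or_pos with rfl | hN
  · simp [binomAtMean, Nat.le_zero.1 hk]
  have hsum : (k : ℝ) / N + (N - k) / N = 1 := by field_simp; ring
  have hq : (0 : ℝ) ≤ (N - k) / N := by rw [← Nat.cast_sub hk]; positivity
  calc binomAtMean N k = (k / N) ^ k * ((N - k) / N) ^ (N - k) * N.choose k := mul_comm _ _
    _ ≤ ∑ j ∈ range (N + 1), (k / N : ℝ) ^ j * ((N - k) / N) ^ (N - j) * N.choose j :=
        single_le_sum (f := fun j => (k / N : ℝ) ^ j * ((N - k) / N) ^ (N - j) * N.choose j)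
          (fun j _ => by positivity) (mem_range.2 (Nat.lt_succ_iff.2 hk))
    _ = 1 := by rw [← add_pow, hsum, one_pow]

lemma factorial_eq_stirlingSeq_mul {n : ℕ} (hn : 0 < n) :
    (n.factorial : ℝ) = Stirling.stirlingSeq n * (√(2 * n) * (n / Real.exp 1) ^ n) :=
  (div_mul_cancel₀ _ (by positivity)).symm

lemma one_sub_latticePt_sq (hN : 0 < N) (k : ℕ) :
    1 - latticePt N k ^ 2 = 4 * (k / N * ((N - k) / N)) := by
  rw [← half_one_add_latticePt, ← half_one_sub_latticePt hN]
  ring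

lemma sqrt_mul_binomAtMean (hk : 0 < k) (hkN : k < N) :
    √N * binomAtMean N k = Stirling.stirlingSeq N /
      (Stirling.stirlingSeq k * Stirling.stirlingSeq (N - k)) *
        (√2 / √(1 - latticePt N k ^ 2)) := by
  obtain ⟨j, rfl⟩ := Nat.exists_eq_add_of_le hkN.le
  have hj : 0 < j := by omega
  have hsub : ((k + j : ℕ) : ℝ) - k = j := by push_cast; ring
  have hsqrt : √(k + j : ℕ) * √(2 * (k + j : ℕ)) / (√(2 * k) * √(2 * j)) =
      √2 / √(1 - latticePt (k + j) k ^ 2) := by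
    rw [one_sub_latticePt_sq (by omega), hsub, ← Real.sqrt_mul (by positivity),
      ← Real.sqrt_mul (by positivity), ← Real.sqrt_div (by positivity),
      ← Real.sqrt_div (by positivity)]
    congr 1
    field_simp
    ring
  have hpow : ((k + j : ℕ) / Real.exp 1) ^ (k + j) * ((k / (k + j : ℕ)) ^ k *
      (j / (k + j : ℕ)) ^ j) / ((k / Real.exp 1) ^ k * (j / Real.exp 1) ^ j) = 1 := by
    have hcancel (x : ℝ) : (k + j : ℕ) / Real.exp 1 * (x / (k + j : ℕ)) = x / Real.exp 1 := by
      field_simp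
    rw [pow_add, mul_mul_mul_comm, ← mul_pow, ← mul_pow, hcancel, hcancel, div_self (by positivity)]
  rw [← hsqrt, binomAtMean, hsub, Nat.add_sub_cancel_left, Nat.cast_add_choose,
    factorial_eq_stirlingSeq_mul (by omega : 0 < k + j), factorial_eq_stirlingSeq_mul hk,
    factorial_eq_stirlingSeq_mul hj]
  linear_combination Stirling.stirlingSeq (k + j) /
    (Stirling.stirlingSeq k * Stirling.stirlingSeq j) *
      (√(k + j : ℕ) * √(2 * (k + j : ℕ)) / (√(2 * k) * √(2 * j))) * hpow

lemma stirlingSeq_pos {n : ℕ} (hn : 0 < n) : 0 < Stirling.stirlingSeq n :=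
  (Real.sqrt_pos.2 Real.pi_pos).trans_le (Stirling.sqrt_pi_le_stirlingSeq hn.ne')

lemma stirlingSeq_le_stirlingSeq_one {n : ℕ} (hn : 0 < n) :
    Stirling.stirlingSeq n ≤ Stirling.stirlingSeq 1 := by
  obtain ⟨k, rfl⟩ := Nat.exists_eq_succ_of_ne_zero hn.ne'
  exact Stirling.stirlingSeq'_antitone k.zero_le

lemma exists_le_sqrt_mul_binomAtMean :
    ∃ c : ℝ, 0 < c ∧ ∀ N k : ℕ, 0 < N → k ≤ N → c ≤ √N * binomAtMean N k := by
  have hS := stirlingSeq_pos one_pos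
  refine ⟨min 1 (√Real.pi / (Stirling.stirlingSeq 1 * Stirling.stirlingSeq 1) * (√2 / 1)),
    by positivity, fun N k hN hkN => ?_⟩
  by_cases hint : 0 < k ∧ k < N
  · obtain ⟨hk, hkN⟩ := hint
    refine min_le_of_right_le ?_
    have hvar : 0 < 1 - latticePt N k ^ 2 := by
      rw [one_sub_latticePt_sq hN, ← Nat.cast_sub hkN.le]
      have : (0 : ℝ) < (N - k : ℕ) := by exact_mod_cast Nat.sub_pos_of_lt hkN
      positivity
    have hvar1 : √(1 - latticePt N k ^ 2) ≤ 1 := by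
      rw [Real.sqrt_le_one]
      exact sub_le_self _ (sq_nonneg _)
    rw [sqrt_mul_binomAtMean hk hkN]
    have := stirlingSeq_pos hN
    have := stirlingSeq_pos hk
    have := stirlingSeq_pos (Nat.sub_pos_of_lt hkN)
    gcongr
    · exact Stirling.sqrt_pi_le_stirlingSeq hN.ne'
    · exact stirlingSeq_le_stirlingSeq_one hk
    · exact stirlingSeq_le_stirlingSeq_one (Nat.sub_pos_of_lt hkN)
  · have hend : binomAtMean N k = 1 := by
      obtain rfl | rfl : k = 0 ∨ k = N := by omega
      · simp [binomAtMean, hN.ne']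
      · simp [binomAtMean, hN.ne']
    rw [hend, mul_one]
    exact min_le_of_left_le (Real.one_le_sqrt.2 (by exact_mod_cast hN))

lemma exists_sqrt_mul_binomAtMean_le {q : ℝ} (hq : q < 1) :
    ∃ K : ℝ, 0 ≤ K ∧ ∀ N k : ℕ, 0 < N → |latticePt N k| ≤ q → √N * binomAtMean N k ≤ K := by
  have hS := stirlingSeq_pos one_pos
  refine ⟨Stirling.stirlingSeq 1 / (√Real.pi * √Real.pi) * (√2 / √(1 - q ^ 2)), by positivity,
    fun N k hN hx => ?_⟩
  have hxlt := abs_lt.1 (hx.trans_lt hq)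
  have hk : 0 < k := Nat.pos_of_ne_zero fun hk => by simp [hk, latticePt] at hxlt
  have hkN : k < N := (latticePt_strictMono hN).lt_iff_lt.1 (latticePt_self hN ▸ hxlt.2)
  rw [sqrt_mul_binomAtMean hk hkN]
  have hsq : latticePt N k ^ 2 ≤ q ^ 2 := sq_le_sq' (neg_le_of_abs_le hx) (le_of_abs_le hx)
  have hq1 : 0 < 1 - q ^ 2 := by nlinarith [(abs_nonneg _).trans hx]
  have := stirlingSeq_pos hN
  have := stirlingSeq_pos hk
  gcongr
  · exact stirlingSeq_le_stirlingSeq_one hN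
  · exact Stirling.sqrt_pi_le_stirlingSeq hk.ne'
  · exact Stirling.sqrt_pi_le_stirlingSeq (Nat.sub_pos_of_lt hkN).ne'

lemma sqrt_mul_exp_neg_le (N : ℕ) {c : ℝ} (hc : 0 < c) : √N * Real.exp (-c * N) ≤ c⁻¹ := by
  have hsqrt : √(N : ℝ) ≤ N := by
    rw [Real.sqrt_le_left N.cast_nonneg]
    exact_mod_cast Nat.le_self_pow two_ne_zero N
  rw [neg_mul, Real.exp_neg, ← div_eq_mul_inv, div_le_iff₀ (Real.exp_pos _), inv_mul_eq_div,
    le_div_iff₀ hc]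
  calc √(N : ℝ) * c ≤ N * c := by gcongr
    _ ≤ Real.exp (c * N) := by linarith [Real.add_one_le_exp (c * N)]

lemma exists_sqrt_mul_binomAtMean_mul_exp_le {m c : ℝ} (hm : m ∈ Set.Ioo (-1) 1) (hc : 0 < c) :
    ∃ K : ℝ, 0 ≤ K ∧ ∀ N k : ℕ, 0 < N → k ≤ N →
      √N * binomAtMean N k * Real.exp (-c * (N * (latticePt N k - m) ^ 2)) ≤ K := by
  have habs : |m| < 1 := abs_lt.2 hm
  obtain ⟨q, hmq, hq1⟩ := exists_between habs
  obtain ⟨K, hK0, hK⟩ := exists_sqrt_mul_binomAtMean_le hq1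
  have hδ : 0 < c * (q - |m|) ^ 2 := by have := sub_pos.2 hmq; positivity
  refine ⟨max K (c * (q - |m|) ^ 2)⁻¹, le_max_of_le_left hK0, fun N k hN hk => ?_⟩
  have hnonneg : 0 ≤ √N * binomAtMean N k := mul_nonneg (Real.sqrt_nonneg _) (binomAtMean_nonneg hk)
  rcases le_or_gt |latticePt N k| q with hx | hx
  · refine le_max_of_le_left ((mul_le_of_le_one_right hnonneg ?_).trans (hK N k hN hx))
    rw [Real.exp_le_one_iff, neg_mul, neg_nonpos]
    positivity
  · refine le_max_of_le_right ((?_ : _ ≤ _).trans (sqrt_mul_exp_neg_le N hδ))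
    have hfar : (q - |m|) ^ 2 ≤ (latticePt N k - m) ^ 2 := by
      rw [← sq_abs (latticePt N k - m)]
      have := abs_sub_abs_le_abs_sub (latticePt N k) m
      gcongr
      linarith
    calc √N * binomAtMean N k * Real.exp (-c * (N * (latticePt N k - m) ^ 2))
        ≤ √N * 1 * Real.exp (-c * (N * (q - |m|) ^ 2)) := by
          gcongr ?_ * ?_ * Real.exp ?_
          · exact binomAtMean_le_one hk
          · rw [neg_mul, neg_mul]; gcongr
      _ = √N * Real.exp (-(c * (q - |m|) ^ 2) * N) := by ring_nf

lemma tendsto_atTop_of_tendsto_div {k : ℕ → ℕ} {p : ℝ} (hp : 0 < p)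
    (hk : Tendsto (fun N : ℕ => (k N : ℝ) / N) atTop (𝓝 p)) : Tendsto k atTop atTop := by
  rw [← tendsto_natCast_atTop_iff (R := ℝ)]
  refine (hk.pos_mul_atTop hp tendsto_natCast_atTop_atTop).congr' ?_
  filter_upwards [eventually_gt_atTop 0] with N hN
  exact div_mul_cancel₀ _ (by positivity)

lemma tendsto_sqrt_mul_binomAtMean {m : ℝ} (hm : m ∈ Set.Ioo (-1) 1) {k : ℕ → ℕ}
    (hk : Tendsto (fun N => latticePt N (k N)) atTop (𝓝 m)) :
    Tendsto (fun N : ℕ => √N * binomAtMean N (k N)) atTop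
      (𝓝 (√Real.pi / (√Real.pi * √Real.pi) * (√2 / √(1 - m ^ 2)))) := by
  have hle := eventually_le_of_tendsto_latticePt hm.2 hk
  have hup : Tendsto k atTop atTop := by
    refine tendsto_atTop_of_tendsto_div (by linarith [hm.1] : 0 < (1 + m) / 2) ?_
    simpa only [half_one_add_latticePt] using (hk.const_add 1).div_const 2
  have hdown : Tendsto (fun N => N - k N) atTop atTop := by
    refine tendsto_atTop_of_tendsto_div (by linarith [hm.2] : 0 < (1 - m) / 2)
      (((hk.const_sub 1).div_const 2).congr' ?_)
    filter_upwards [hle, eventually_gt_atTop 0] with N hkN hN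
    rw [half_one_sub_latticePt hN, Nat.cast_sub hkN]
  have hpi : √Real.pi ≠ 0 := (Real.sqrt_pos.2 Real.pi_pos).ne'
  have hvar : √(1 - m ^ 2) ≠ 0 := (Real.sqrt_pos.2 (by nlinarith [hm.1, hm.2])).ne'
  have hS := Stirling.tendsto_stirlingSeq_sqrt_pi
  refine ((hS.div ((hS.comp hup).mul (hS.comp hdown)) (mul_ne_zero hpi hpi)).mul
    (tendsto_const_nhds.div ((hk.pow 2).const_sub 1).sqrt hvar)).congr' ?_
  filter_upwards [hup.eventually_gt_atTop 0, hdown.eventually_gt_atTop 0] with N hk0 hkN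
  exact (sqrt_mul_binomAtMean hk0 (by omega)).symm

end BinomialPeak

section FreeEnergy

variable {β h a s b m : ℝ}

/-- The derivative of the free energy `f_β` on `(-1, 1)`. -/
def freeEnergySlope (β h m : ℝ) : ℝ := β⁻¹ * Real.artanh m - m - h

/-- The second derivative of the free energy `f_β` on `(-1, 1)`; it does not depend on `h`. -/
def freeEnergyCurv (β m : ℝ) : ℝ := β⁻¹ / (1 - m ^ 2) - 1

lemma Ient_eq_neg_binEntropy (m : ℝ) : Ient m = -Real.binEntropy ((1 + m) / 2) := by
  rw [Ient, Real.binEntropy, Real.log_inv, Real.log_inv,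
    show 1 - (1 + m) / 2 = (1 - m) / 2 by ring]
  ring

lemma hasDerivAt_Ient (hm : m ∈ Set.Ioo (-1) 1) : HasDerivAt Ient (Real.artanh m) m := by
  have hent := (Real.hasDerivAt_binEntropy (p := (1 + m) / 2) (by linarith [hm.1])
    (by linarith [hm.2])).comp m (((hasDerivAt_id m).const_add 1).div_const 2)
  refine (hent.neg.congr_of_eventuallyEq (.of_forall Ient_eq_neg_binEntropy)).congr_deriv ?_
  have hp : 0 < 1 + m := by linarith [hm.1]
  have hq : 0 < 1 - m := by linarith [hm.2]
  rw [Real.artanh_eq_half_log ⟨hm.1.le, hm.2.le⟩, Real.log_div hp.ne' hq.ne',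
    show 1 - (1 + m) / 2 = (1 - m) / 2 by ring, Real.log_div hq.ne' two_ne_zero,
    Real.log_div hp.ne' two_ne_zero]
  ring

lemma hasDerivAt_artanh (hm : m ∈ Set.Ioo (-1) 1) :
    HasDerivAt Real.artanh (1 / (1 - m ^ 2)) m := by
  have hp : 1 + m ≠ 0 := by linarith [hm.1]
  have hq : 1 - m ≠ 0 := by linarith [hm.2]
  have hlog : HasDerivAt (fun x => 1 / 2 * (Real.log (1 + x) - Real.log (1 - x)))
      (1 / 2 * (1 / (1 + m) - -1 / (1 - m))) m :=
    ((((hasDerivAt_id m).const_add 1).log hp).sub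
      (((hasDerivAt_id m).const_sub 1).log hq)).const_mul _
  refine (hlog.congr_of_eventuallyEq ?_).congr_deriv ?_
  · filter_upwards [Ioo_mem_nhds hm.1 hm.2] with x hx
    rw [Real.artanh_eq_half_log ⟨hx.1.le, hx.2.le⟩, Real.log_div] <;> linarith [hx.1, hx.2]
  · have : 1 - m ^ 2 ≠ 0 := by rw [← one_pow 2, sq_sub_sq]; exact mul_ne_zero hp hq
    field_simp
    ring

lemma hasDerivAt_fE (β h : ℝ) (hm : m ∈ Set.Ioo (-1) 1) :
    HasDerivAt (fE β h) (freeEnergySlope β h m) m := by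
  have henergy : HasDerivAt (Em h) (-m - h) m :=
    ((((hasDerivAt_pow 2 m).neg.div_const 2)).sub ((hasDerivAt_id m).const_mul h)).congr_deriv
      (by simp; ring)
  exact (henergy.add ((hasDerivAt_Ient hm).const_mul β⁻¹)).congr_deriv
    (by unfold freeEnergySlope; ring)

lemma hasDerivAt_freeEnergySlope (β h : ℝ) (hm : m ∈ Set.Ioo (-1) 1) :
    HasDerivAt (freeEnergySlope β h) (freeEnergyCurv β m) m :=
  ((((hasDerivAt_artanh hm).const_mul β⁻¹).sub (hasDerivAt_id m)).sub_const h).congr_deriv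
    (by unfold freeEnergyCurv; ring)

lemma iteratedDeriv_two_fE (β h : ℝ) (hm : m ∈ Set.Ioo (-1) 1) :
    iteratedDeriv 2 (fE β h) m = freeEnergyCurv β m := by
  rw [iteratedDeriv_succ, iteratedDeriv_one]
  have hderiv : deriv (fE β h) =ᶠ[𝓝 m] freeEnergySlope β h := by
    filter_upwards [Ioo_mem_nhds hm.1 hm.2] with x hx
    exact (hasDerivAt_fE β h hx).deriv
  rw [hderiv.deriv_eq, (hasDerivAt_freeEnergySlope β h hm).deriv]

lemma continuous_fE (β h : ℝ) : Continuous (fE β h) := by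
  unfold fE Em
  simp only [Ient_eq_neg_binEntropy]
  fun_prop

lemma continuousOn_freeEnergySlope (β h : ℝ) :
    ContinuousOn (freeEnergySlope β h) (Set.Ioo (-1) 1) :=
  fun _ hx => (hasDerivAt_freeEnergySlope β h hx).continuousAt.continuousWithinAt

lemma freeEnergyCurv_lt_freeEnergyCurv (hβ : 0 < β) {x y : ℝ} (hy : y ∈ Set.Ioo (-1) 1)
    (hxy : |x| < |y|) : freeEnergyCurv β x < freeEnergyCurv β y := by
  have hy1 : 0 < 1 - y ^ 2 := sub_pos.2 ((sq_lt_one_iff_abs_lt_one y).2 (abs_lt.2 hy))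
  have hsq := sq_lt_sq.2 hxy
  unfold freeEnergyCurv
  gcongr

/-- The magnetisations `a < s < b` are critical points of the free energy `f_β`. For such a triple
`a` and `b` are local minima, and `s` is the local maximum separating them. -/
structure IsCriticalTriple (β h a s b : ℝ) : Prop where
  lt_saddle : a < s
  saddle_lt : s < b
  left_eq : a = Real.tanh (β * (a + h))
  saddle_eq : s = Real.tanh (β * (s + h))
  right_eq : b = Real.tanh (β * (b + h))

lemma mem_Ioo_of_eq_tanh {x : ℝ} (hm : m = Real.tanh x) : m ∈ Set.Ioo (-1) 1 :=
  hm ▸ ⟨Real.neg_one_lt_tanh _, Real.tanh_lt_one _⟩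

lemma artanh_eq_of_eq_tanh {x : ℝ} (hm : m = Real.tanh x) : Real.artanh m = x :=
  hm ▸ Real.artanh_tanh x

lemma freeEnergySlope_eq_zero (hβ : β ≠ 0) (hm : m = Real.tanh (β * (m + h))) :
    freeEnergySlope β h m = 0 := by
  rw [freeEnergySlope, artanh_eq_of_eq_tanh hm, inv_mul_cancel_left₀ hβ]
  ring

lemma exp_two_mul_artanh (hm : m ∈ Set.Ioo (-1) 1) :
    Real.exp (2 * Real.artanh m) = (1 + m) / (1 - m) := by
  rw [two_mul, Real.exp_add, Real.exp_artanh hm, Real.mul_self_sqrt]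
  exact div_nonneg (by linarith [hm.1]) (by linarith [hm.2])

lemma exp_max_mul_of_eq_tanh (hβ : 0 ≤ β) (hm : m = Real.tanh (β * (m + h))) :
    Real.exp (-β * max (-2 * (m + h)) 0) * ((1 - m) / 2) = (1 - |m|) / 2 := by
  have hart := artanh_eq_of_eq_tanh hm
  have hmem := mem_Ioo_of_eq_tanh hm
  have hmax : -β * max (-2 * (m + h)) 0 = -max (-(2 * Real.artanh m)) 0 := by
    rw [hart, neg_mul, mul_max_of_nonneg _ _ hβ, mul_zero]
    congr 2
    ring
  rcases le_total 0 m with hm0 | hm0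
  · rw [hmax, max_eq_right (by linarith [Real.artanh_nonneg hm0]), neg_zero, Real.exp_zero,
      one_mul, abs_of_nonneg hm0]
  · rw [hmax, max_eq_left (by linarith [Real.artanh_nonpos hm0]), neg_neg, exp_two_mul_artanh hmem,
      abs_of_nonpos hm0]
    have : 1 - m ≠ 0 := by linarith [hmem.2]
    field_simp
    ring

lemma strictMonoOn_freeEnergySlope {D : Set ℝ} (hD : Convex ℝ D) (hD1 : D ⊆ Set.Ioo (-1) 1)
    (hcurv : ∀ x ∈ interior D, 0 < freeEnergyCurv β x) : StrictMonoOn (freeEnergySlope β h) D :=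
  strictMonoOn_of_deriv_pos hD ((continuousOn_freeEnergySlope β h).mono hD1) fun x hx => by
    rw [(hasDerivAt_freeEnergySlope β h (hD1 (interior_subset hx))).deriv]
    exact hcurv x hx

lemma strictAntiOn_freeEnergySlope {D : Set ℝ} (hD : Convex ℝ D) (hD1 : D ⊆ Set.Ioo (-1) 1)
    (hcurv : ∀ x ∈ interior D, freeEnergyCurv β x < 0) : StrictAntiOn (freeEnergySlope β h) D :=
  strictAntiOn_of_deriv_neg hD ((continuousOn_freeEnergySlope β h).mono hD1) fun x hx => by
    rw [(hasDerivAt_freeEnergySlope β h (hD1 (interior_subset hx))).deriv]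
    exact hcurv x hx

lemma exists_freeEnergyCurv_eq_zero {x y : ℝ} (hx : -1 < x) (hxy : x < y) (hy : y < 1)
    (hslope : freeEnergySlope β h x = freeEnergySlope β h y) :
    ∃ z ∈ Set.Ioo x y, freeEnergyCurv β z = 0 :=
  exists_hasDerivAt_eq_zero hxy
    ((continuousOn_freeEnergySlope β h).mono (Set.Icc_subset_Ioo hx hy)) hslope fun _ hz =>
      hasDerivAt_freeEnergySlope β h ⟨hx.trans hz.1, hz.2.trans hy⟩

namespace IsCriticalTriple

lemma left_mem (H : IsCriticalTriple β h a s b) : a ∈ Set.Ioo (-1) 1 := mem_Ioo_of_eq_tanh H.left_eq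

lemma saddle_mem (H : IsCriticalTriple β h a s b) : s ∈ Set.Ioo (-1) 1 :=
  mem_Ioo_of_eq_tanh H.saddle_eq

lemma right_mem (H : IsCriticalTriple β h a s b) : b ∈ Set.Ioo (-1) 1 :=
  mem_Ioo_of_eq_tanh H.right_eq

lemma exists_inflection (H : IsCriticalTriple β h a s b) (hβ : 0 < β) :
    ∃ r, a < -r ∧ -r < s ∧ s < r ∧ r < b ∧ freeEnergyCurv β r = 0 := by
  have ha0 := freeEnergySlope_eq_zero hβ.ne' H.left_eq
  have hs0 := freeEnergySlope_eq_zero hβ.ne' H.saddle_eq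
  have hb0 := freeEnergySlope_eq_zero hβ.ne' H.right_eq
  obtain ⟨c, hc, hc0⟩ := exists_freeEnergyCurv_eq_zero H.left_mem.1 H.lt_saddle H.saddle_mem.2
    (ha0.trans hs0.symm)
  obtain ⟨d, hd, hd0⟩ := exists_freeEnergyCurv_eq_zero H.saddle_mem.1 H.saddle_lt H.right_mem.2
    (hs0.trans hb0.symm)
  have hcmem : c ∈ Set.Ioo (-1) 1 := ⟨H.left_mem.1.trans hc.1, hc.2.trans H.saddle_mem.2⟩
  have hdmem : d ∈ Set.Ioo (-1) 1 := ⟨H.saddle_mem.1.trans hd.1, hd.2.trans H.right_mem.2⟩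
  have habs : |c| = |d| := by
    rcases lt_trichotomy |c| |d| with hlt | heq | hlt
    · linarith [freeEnergyCurv_lt_freeEnergyCurv hβ hdmem hlt]
    · exact heq
    · linarith [freeEnergyCurv_lt_freeEnergyCurv hβ hcmem hlt]
  obtain rfl | rfl := abs_eq_abs.1 habs
  · exact absurd (hc.2.trans hd.1) (lt_irrefl _)
  · exact ⟨d, hc.1, hc.2, hd.1, hd.2, hd0⟩

lemma curv_left_pos (H : IsCriticalTriple β h a s b) (hβ : 0 < β) : 0 < freeEnergyCurv β a := by
  obtain ⟨r, har, hrs, hsr, -, hr⟩ := H.exists_inflection hβ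
  exact hr ▸ freeEnergyCurv_lt_freeEnergyCurv hβ H.left_mem
    (by rw [abs_of_pos (by linarith), abs_of_neg (by linarith)]; linarith)

lemma curv_saddle_neg (H : IsCriticalTriple β h a s b) (hβ : 0 < β) : freeEnergyCurv β s < 0 := by
  obtain ⟨r, -, hrs, hsr, hrb, hr⟩ := H.exists_inflection hβ
  exact hr ▸ freeEnergyCurv_lt_freeEnergyCurv hβ ⟨by linarith, hrb.trans H.right_mem.2⟩
    ((abs_lt.2 ⟨hrs, hsr⟩).trans_le (le_abs_self r))

lemma exists_slope_strictMono_strictAnti (H : IsCriticalTriple β h a s b) (hβ : 0 < β) :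
    ∃ r, a < -r ∧ -r < s ∧ s < r ∧ r < b ∧
      StrictMonoOn (freeEnergySlope β h) (Set.Ioc (-1) (-r)) ∧
      StrictAntiOn (freeEnergySlope β h) (Set.Icc (-r) r) ∧
      StrictMonoOn (freeEnergySlope β h) (Set.Ico r 1) := by
  obtain ⟨r, har, hrs, hsr, hrb, hr⟩ := H.exists_inflection hβ
  have hr0 : 0 < r := by linarith
  have hr1 : r < 1 := hrb.trans H.right_mem.2
  have hpos {x : ℝ} (hx : x ∈ Set.Ioo (-1) 1) (hrx : r < |x|) : 0 < freeEnergyCurv β x :=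
    hr ▸ freeEnergyCurv_lt_freeEnergyCurv hβ hx (by rwa [abs_of_pos hr0])
  refine ⟨r, har, hrs, hsr, hrb, strictMonoOn_freeEnergySlope (convex_Ioc _ _)
    (fun x hx => ⟨hx.1, by linarith [hx.2]⟩) fun x hx => ?_,
    strictAntiOn_freeEnergySlope (convex_Icc _ _) (Set.Icc_subset_Ioo (by linarith) hr1)
    fun x hx => ?_, strictMonoOn_freeEnergySlope (convex_Ico _ _)
    (fun x hx => ⟨by linarith [hx.1], hx.2⟩) fun x hx => ?_⟩
  · rw [interior_Ioc] at hx
    exact hpos ⟨hx.1, by linarith [hx.2]⟩ (lt_abs.2 (.inr (by linarith [hx.2])))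
  · rw [interior_Icc] at hx
    exact hr ▸ freeEnergyCurv_lt_freeEnergyCurv hβ ⟨by linarith, hr1⟩
      ((abs_lt.2 hx).trans_le (le_abs_self r))
  · rw [interior_Ico] at hx
    exact hpos ⟨by linarith [hx.1], hx.2⟩ (lt_abs.2 (.inl hx.1))

lemma slope_neg_of_lt_left (H : IsCriticalTriple β h a s b) (hβ : 0 < β) {x : ℝ} (hx : -1 < x)
    (hxa : x < a) : freeEnergySlope β h x < 0 := by
  obtain ⟨r, har, -, -, -, hmono, -, -⟩ := H.exists_slope_strictMono_strictAnti hβ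
  rw [← freeEnergySlope_eq_zero hβ.ne' H.left_eq]
  exact hmono ⟨hx, by linarith⟩ ⟨H.left_mem.1, har.le⟩ hxa

lemma slope_pos_of_mem_Ioo (H : IsCriticalTriple β h a s b) (hβ : 0 < β) {x : ℝ}
    (hx : x ∈ Set.Ioo a s) : 0 < freeEnergySlope β h x := by
  obtain ⟨r, har, hrs, hsr, -, hmono, hanti, -⟩ := H.exists_slope_strictMono_strictAnti hβ
  rcases le_total x (-r) with hxr | hxr
  · rw [← freeEnergySlope_eq_zero hβ.ne' H.left_eq]
    exact hmono ⟨H.left_mem.1, har.le⟩ ⟨H.left_mem.1.trans hx.1, hxr⟩ hx.1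
  · rw [← freeEnergySlope_eq_zero hβ.ne' H.saddle_eq]
    exact hanti ⟨hxr, hx.2.le.trans hsr.le⟩ ⟨hrs.le, hsr.le⟩ hx.2

lemma slope_neg_of_mem_Ioo (H : IsCriticalTriple β h a s b) (hβ : 0 < β) {x : ℝ}
    (hx : x ∈ Set.Ioo s b) : freeEnergySlope β h x < 0 := by
  obtain ⟨r, -, hrs, hsr, hrb, -, hanti, hmono⟩ := H.exists_slope_strictMono_strictAnti hβ
  rcases le_total x r with hxr | hxr
  · rw [← freeEnergySlope_eq_zero hβ.ne' H.saddle_eq]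
    exact hanti ⟨hrs.le, hsr.le⟩ ⟨hrs.le.trans hx.1.le, hxr⟩ hx.1
  · rw [← freeEnergySlope_eq_zero hβ.ne' H.right_eq]
    exact hmono ⟨hxr, hx.2.trans H.right_mem.2⟩ ⟨hrb.le, H.right_mem.2⟩ hx.2

lemma saddle_neg (H : IsCriticalTriple β h a s b) (hβ : 0 < β) (hh : 0 < h) : s < 0 := by
  obtain ⟨r, -, hrs, hsr, -, -, hanti, -⟩ := H.exists_slope_strictMono_strictAnti hβ
  refine (hanti.lt_iff_gt ⟨by linarith, by linarith⟩ ⟨hrs.le, hsr.le⟩).1 ?_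
  rw [freeEnergySlope_eq_zero hβ.ne' H.saddle_eq, freeEnergySlope, Real.artanh_zero]
  linarith

lemma strictAntiOn_Icc_left (H : IsCriticalTriple β h a s b) (hβ : 0 < β) :
    StrictAntiOn (fE β h) (Set.Icc (-1) a) := by
  refine strictAntiOn_of_deriv_neg (convex_Icc _ _) (continuous_fE β h).continuousOn fun x hx => ?_
  rw [interior_Icc] at hx
  rw [(hasDerivAt_fE β h ⟨hx.1, hx.2.trans H.left_mem.2⟩).deriv]
  exact H.slope_neg_of_lt_left hβ hx.1 hx.2

lemma strictMonoOn_Icc (H : IsCriticalTriple β h a s b) (hβ : 0 < β) :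
    StrictMonoOn (fE β h) (Set.Icc a s) := by
  refine strictMonoOn_of_deriv_pos (convex_Icc _ _) (continuous_fE β h).continuousOn fun x hx => ?_
  rw [interior_Icc] at hx
  rw [(hasDerivAt_fE β h ⟨H.left_mem.1.trans hx.1, hx.2.trans H.saddle_mem.2⟩).deriv]
  exact H.slope_pos_of_mem_Ioo hβ hx

lemma strictAntiOn_Icc (H : IsCriticalTriple β h a s b) (hβ : 0 < β) :
    StrictAntiOn (fE β h) (Set.Icc s b) := by
  refine strictAntiOn_of_deriv_neg (convex_Icc _ _) (continuous_fE β h).continuousOn fun x hx => ?_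
  rw [interior_Icc] at hx
  rw [(hasDerivAt_fE β h ⟨H.saddle_mem.1.trans hx.1, hx.2.trans H.right_mem.2⟩).deriv]
  exact H.slope_neg_of_mem_Ioo hβ hx

end IsCriticalTriple

end FreeEnergy

section Barrier

lemma exists_pos_forall_mul_le_of_isCompact {X : Type*} [TopologicalSpace X] {K : Set X}
    (hK : IsCompact K) {z : X} {φ ψ : X → ℝ} (hφ : ContinuousOn φ K) (hψ : ContinuousOn ψ K)
    (hψ0 : ∀ x ∈ K, 0 ≤ ψ x) (hpos : ∀ x ∈ K, x ≠ z → 0 < φ x) {c₀ : ℝ} (hc₀ : 0 < c₀)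
    (hloc : ∀ᶠ x in 𝓝[K] z, c₀ * ψ x ≤ φ x) : ∃ c > 0, ∀ x ∈ K, c * ψ x ≤ φ x := by
  suffices ∃ c > 0, ∀ x ∈ K, x ∈ K → c * ψ x ≤ φ x by
    obtain ⟨c, hc, hle⟩ := this
    exact ⟨c, hc, fun x hx => hle x hx hx⟩
  refine hK.induction_on (p := fun S => ∃ c > 0, ∀ x ∈ S, x ∈ K → c * ψ x ≤ φ x)
    ⟨1, one_pos, by simp⟩ ?_ ?_ fun x hx => ?_
  · rintro S T hST ⟨c, hc, hle⟩
    exact ⟨c, hc, fun x hx => hle x (hST hx)⟩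
  · rintro S T ⟨c, hc, hS⟩ ⟨d, hd, hT⟩
    refine ⟨min c d, lt_min hc hd, fun x hx hxK => ?_⟩
    rcases hx with hx | hx
    · exact (mul_le_mul_of_nonneg_right (min_le_left _ _) (hψ0 x hxK)).trans (hS x hx hxK)
    · exact (mul_le_mul_of_nonneg_right (min_le_right _ _) (hψ0 x hxK)).trans (hT x hx hxK)
  · rcases eq_or_ne x z with rfl | hxz
    · exact ⟨_, hloc, c₀, hc₀, fun y hy _ => hy⟩
    · have hφx := hpos x hx hxz
      have hψx := hψ0 x hx
      have hlt : φ x / (ψ x + 1) * ψ x < φ x := by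
        rw [div_mul_eq_mul_div, div_lt_iff₀ (by positivity)]
        linarith
      exact ⟨_, ((hψ x hx).const_mul _).eventually_lt (hφ x hx) hlt, φ x / (ψ x + 1),
        by positivity, fun y hy _ => le_of_lt hy⟩

lemma exists_eq_add_mul_sq {f g : ℝ → ℝ} {m κ : ℝ} (hf : ∀ᶠ x in 𝓝 m, HasDerivAt f (g x) x)
    (hg0 : g m = 0) (hg : HasDerivAt g κ m) :
    ∃ q : ℝ → ℝ, Tendsto q (𝓝 m) (𝓝 (κ / 2)) ∧ ∀ x, f x = f m + q x * (x - m) ^ 2 := by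
  have hquot : Tendsto (fun x => (f x - f m) / (x - m) ^ 2) (𝓝[≠] m) (𝓝 (κ / 2)) := by
    have hsq (x : ℝ) : HasDerivAt (fun x => (x - m) ^ 2) (2 * (x - m)) x :=
      (((hasDerivAt_id x).sub_const m).pow 2).congr_deriv (by simp)
    refine HasDerivAt.lhopital_zero_nhdsNE (f' := g) (g' := fun x => 2 * (x - m))
      ((hf.filter_mono nhdsWithin_le_nhds).mono fun x hx => hx.sub_const _)
      (.of_forall hsq) ?_ ?_ ?_ ?_
    · exact eventually_mem_nhdsWithin.mono fun x hx => mul_ne_zero two_ne_zero (sub_ne_zero.2 hx)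
    · simpa using (hf.self_of_nhds.continuousAt.tendsto.sub_const (f m)).mono_left
        nhdsWithin_le_nhds
    · simpa using (hsq m).continuousAt.tendsto.mono_left nhdsWithin_le_nhds
    · refine ((hasDerivAt_iff_tendsto_slope.1 hg).div_const 2).congr fun x => ?_
      rw [slope_def_field, hg0, sub_zero, div_div, mul_comm]
  refine ⟨Function.update (fun x => (f x - f m) / (x - m) ^ 2) m (κ / 2), ?_, fun x => ?_⟩
  · simpa [ContinuousAt] using continuousAt_update_same.2 hquot
  · rcases eq_or_ne x m with rfl | hx
    · simp
    · rw [Function.update_of_ne hx, div_mul_cancel₀ _ (pow_ne_zero 2 (sub_ne_zero.2 hx))]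
      ring

variable {β h a s b m : ℝ}

lemma exists_fE_eq_add_mul_sq (hβ : β ≠ 0) (hm : m = Real.tanh (β * (m + h))) :
    ∃ q : ℝ → ℝ, Tendsto q (𝓝 m) (𝓝 (freeEnergyCurv β m / 2)) ∧
      ∀ x, fE β h x = fE β h m + q x * (x - m) ^ 2 := by
  have hmem := mem_Ioo_of_eq_tanh hm
  refine exists_eq_add_mul_sq ?_ (freeEnergySlope_eq_zero hβ hm)
    (hasDerivAt_freeEnergySlope β h hmem)
  filter_upwards [Ioo_mem_nhds hmem.1 hmem.2] with x hx
  exact hasDerivAt_fE β h hx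

lemma tendsto_mul_fE_sub (hβ : β ≠ 0) (hm : m = Real.tanh (β * (m + h))) {k : ℕ → ℕ} {t : ℝ}
    (hk : Tendsto (fun N => scaledPt m N (k N)) atTop (𝓝 t)) :
    Tendsto (fun N : ℕ => N * (fE β h (latticePt N (k N)) - fE β h m)) atTop
      (𝓝 (freeEnergyCurv β m / 2 * t ^ 2)) := by
  obtain ⟨q, hq, hf⟩ := exists_fE_eq_add_mul_sq hβ hm
  refine ((hq.comp (tendsto_latticePt_of_scaledPt hk)).mul (hk.pow 2)).congr fun N => ?_
  rw [Function.comp_apply, scaledPt_sq, hf (latticePt N (k N))]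
  ring

namespace IsCriticalTriple

lemma fE_left_lt (H : IsCriticalTriple β h a s b) (hβ : 0 < β) {y : ℝ} (hy : y ∈ Set.Icc (-1) s)
    (hya : y ≠ a) : fE β h a < fE β h y := by
  rcases hya.lt_or_gt with hlt | hlt
  · exact H.strictAntiOn_Icc_left hβ ⟨hy.1, hlt.le⟩ ⟨H.left_mem.1.le, le_rfl⟩ hlt
  · exact H.strictMonoOn_Icc hβ ⟨le_rfl, H.lt_saddle.le⟩ ⟨hlt.le, hy.2⟩ hlt

lemma fE_lt_saddle (H : IsCriticalTriple β h a s b) (hβ : 0 < β) {x : ℝ} (hx : x ∈ Set.Icc a b)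
    (hxs : x ≠ s) : fE β h x < fE β h s := by
  rcases hxs.lt_or_gt with hlt | hlt
  · exact H.strictMonoOn_Icc hβ ⟨hx.1, hlt.le⟩ ⟨H.lt_saddle.le, le_rfl⟩ hlt
  · exact H.strictAntiOn_Icc hβ ⟨le_rfl, H.saddle_lt.le⟩ ⟨hlt.le, hx.2⟩ hlt

lemma exists_right_margin (H : IsCriticalTriple β h a s b) {ε : ℝ} (hε : 0 < ε) :
    ∃ q ∈ Set.Ioo b 1, ∀ x ∈ Set.Icc b q, |fE β h x - fE β h b| < ε := by
  have hnear : ∀ᶠ x in 𝓝 b, |fE β h x - fE β h b| < ε :=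
    Metric.tendsto_nhds.1 (continuous_fE β h).continuousAt ε hε
  obtain ⟨δ, hδ, hball⟩ := Metric.eventually_nhds_iff.1 hnear
  obtain ⟨q, hbq, hq⟩ := exists_between (lt_min (lt_add_of_pos_right b hδ) H.right_mem.2)
  refine ⟨q, ⟨hbq, hq.trans_le (min_le_right _ _)⟩, fun x hx => hball ?_⟩
  rw [Real.dist_eq, abs_of_nonneg (sub_nonneg.2 hx.1)]
  linarith [hx.2, hq.trans_le (min_le_left _ _)]

lemma exists_fE_sub_lt (H : IsCriticalTriple β h a s b) (hβ : 0 < β) :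
    ∃ q ∈ Set.Ioo b 1, ∀ x y : ℝ, -1 ≤ y → y ≤ x → x ≤ q → (x, y) ≠ (s, a) →
      fE β h x - fE β h y < fE β h s - fE β h a := by
  have has := H.lt_saddle
  have hsb := H.saddle_lt
  have hfa : fE β h a < fE β h s := H.fE_lt_saddle hβ ⟨le_rfl, by linarith⟩ has.ne
  have hfb : fE β h b < fE β h s := H.fE_lt_saddle hβ ⟨by linarith, le_rfl⟩ hsb.ne'
  obtain ⟨q, hq, hmargin⟩ := H.exists_right_margin
    (lt_min (half_pos (sub_pos.2 hfa)) (half_pos (sub_pos.2 hfb)))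
  simp only [lt_min_iff, abs_lt] at hmargin
  refine ⟨q, hq, fun x y hy hyx hxq hne => ?_⟩
  rcases lt_or_ge x a with hxa | hax
  · have := (H.strictAntiOn_Icc_left hβ).antitoneOn ⟨hy, by linarith⟩ ⟨by linarith, hxa.le⟩ hyx
    linarith
  rcases le_or_gt y s with hys | hsy
  · have hx (hxs : x ≠ s) : fE β h x < fE β h s := by
      rcases le_total x b with hxb | hbx
      · exact H.fE_lt_saddle hβ ⟨hax, hxb⟩ hxs
      · linarith [(hmargin x ⟨hbx, hxq⟩).2.2]
    by_cases hxs : x = s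
    · subst hxs
      linarith [H.fE_left_lt hβ ⟨hy, hys⟩ fun hya => hne (by rw [hya])]
    · by_cases hya : y = a
      · rw [hya]; linarith [hx hxs]
      · linarith [hx hxs, H.fE_left_lt hβ ⟨hy, hys⟩ hya]
  have hanti := (H.strictAntiOn_Icc hβ).antitoneOn
  rcases le_total x b with hxb | hbx
  · linarith [hanti ⟨hsy.le, by linarith⟩ ⟨by linarith, hxb⟩ hyx]
  rcases le_total y b with hyb | hby
  · linarith [(hmargin x ⟨hbx, hxq⟩).1.2, hanti ⟨hsy.le, hyb⟩ ⟨hsb.le, le_rfl⟩ hyb]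
  · linarith [(hmargin x ⟨hbx, hxq⟩).1.2, (hmargin y ⟨hby, by linarith⟩).1.1]

lemma eventually_quadratic_le (H : IsCriticalTriple β h a s b) (hβ : 0 < β) :
    ∃ c > 0, ∀ᶠ p in 𝓝 (s, a), c * ((p.1 - s) ^ 2 + (p.2 - a) ^ 2) ≤
      fE β h s - fE β h a - (fE β h p.1 - fE β h p.2) := by
  obtain ⟨qs, hqs, hfs⟩ := exists_fE_eq_add_mul_sq hβ.ne' H.saddle_eq
  obtain ⟨qa, hqa, hfa⟩ := exists_fE_eq_add_mul_sq hβ.ne' H.left_eq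
  have hcurva := H.curv_left_pos hβ
  have hcurvs := H.curv_saddle_neg hβ
  refine ⟨min (-freeEnergyCurv β s / 4) (freeEnergyCurv β a / 4),
    lt_min (by linarith) (by linarith), ?_⟩
  have hs := (hqs.comp (continuous_fst.tendsto (s, a))).eventually_lt_const
    (by linarith : freeEnergyCurv β s / 2 < freeEnergyCurv β s / 4)
  have ha := (hqa.comp (continuous_snd.tendsto (s, a))).eventually_const_lt
    (by linarith : freeEnergyCurv β a / 4 < freeEnergyCurv β a / 2)
  filter_upwards [hs, ha] with p hps hpa
  rw [Function.comp_apply] at hps hpa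
  rw [hfs p.1, hfa p.2, mul_add]
  have hleft : min (-freeEnergyCurv β s / 4) (freeEnergyCurv β a / 4) * (p.1 - s) ^ 2 ≤
      -qs p.1 * (p.1 - s) ^ 2 := by
    gcongr
    exact (min_le_left _ _).trans (by linarith)
  have hright : min (-freeEnergyCurv β s / 4) (freeEnergyCurv β a / 4) * (p.2 - a) ^ 2 ≤
      qa p.2 * (p.2 - a) ^ 2 := by
    gcongr
    exact (min_le_right _ _).trans hpa.le
  linarith

theorem exists_quadratic_le (H : IsCriticalTriple β h a s b) (hβ : 0 < β) :
    ∃ q ∈ Set.Ioo b 1, ∃ c > 0, ∀ x y : ℝ, -1 ≤ y → y ≤ x → x ≤ q →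
      c * ((x - s) ^ 2 + (y - a) ^ 2) ≤ fE β h s - fE β h a - (fE β h x - fE β h y) := by
  obtain ⟨q, hq, hgap⟩ := H.exists_fE_sub_lt hβ
  obtain ⟨c₀, hc₀, hloc⟩ := H.eventually_quadratic_le hβ
  have hf := continuous_fE β h
  have hK : IsCompact {p : ℝ × ℝ | -1 ≤ p.2 ∧ p.2 ≤ p.1 ∧ p.1 ≤ q} := by
    refine (isCompact_Icc.prod isCompact_Icc : IsCompact (Set.Icc (-1) q ×ˢ Set.Icc (-1) q))
      |>.of_isClosed_subset ?_ fun p hp =>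
        ⟨⟨hp.1.trans hp.2.1, hp.2.2⟩, hp.1, hp.2.1.trans hp.2.2⟩
    exact (isClosed_le continuous_const continuous_snd).inter
      ((isClosed_le continuous_snd continuous_fst).inter
        (isClosed_le continuous_fst continuous_const))
  obtain ⟨c, hc, hle⟩ := exists_pos_forall_mul_le_of_isCompact hK (z := (s, a))
    (φ := fun p => fE β h s - fE β h a - (fE β h p.1 - fE β h p.2))
    (ψ := fun p => (p.1 - s) ^ 2 + (p.2 - a) ^ 2) (by fun_prop) (by fun_prop)
    (fun p _ => by positivity) (fun p hp hne => sub_pos.2 (hgap p.1 p.2 hp.1 hp.2.1 hp.2.2 hne))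
    hc₀ (hloc.filter_mono nhdsWithin_le_nhds)
  exact ⟨q, hq, c, hc, fun x y hy hyx hxq => hle (x, y) ⟨hy, hyx, hxq⟩⟩

end IsCriticalTriple

end Barrier

section Asymptotics

variable {β h a s b u v : ℝ}

/-- The `(i, j)` term of the exact double sum for the mean hitting time, divided by the exponential
of `β N` times the height of the barrier at `s` above `a`. -/
def scaledTerm (β h a s : ℝ) (N i j : ℕ) : ℝ :=
  Real.exp (-β * (N * (fE β h s - fE β h a))) *
    (gibbsWeight N β h j / (gibbsWeight N β h i * upRate N β h (latticePt N i)))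

lemma scaledTerm_eq (hβ : β ≠ 0) (h a s : ℝ) {N i j : ℕ} (hN : 0 < N) (hi : i ≤ N) (hj : j ≤ N) :
    scaledTerm β h a s N i j = √N * binomAtMean N j * (√N * binomAtMean N i)⁻¹ *
      (upRate N β h (latticePt N i))⁻¹ * Real.exp (-β * (N * (fE β h s - fE β h a -
        (fE β h (latticePt N i) - fE β h (latticePt N j))))) := by
  have hsqrt : √(N : ℝ) ≠ 0 := by positivity
  have hexp : Real.exp (-β * (N * (fE β h s - fE β h a -
      (fE β h (latticePt N i) - fE β h (latticePt N j))))) =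
      Real.exp (-β * (N * (fE β h s - fE β h a))) * (Real.exp (-β * N * fE β h (latticePt N j)) *
        (Real.exp (-β * N * fE β h (latticePt N i)))⁻¹) := by
    rw [← Real.exp_neg, ← Real.exp_add, ← Real.exp_add]
    ring_nf
  rw [scaledTerm, gibbsWeight_eq hβ h hi, gibbsWeight_eq hβ h hj, hexp]
  simp only [div_eq_mul_inv, mul_inv]
  field_simp

lemma exp_mul_hitTimeExp_rCW (hβ : 0 ≤ β) (h a s : ℝ) {N i₀ i₁ : ℕ} (hi : i₀ < i₁) (hN : i₁ ≤ N) :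
    Real.exp (-β * (N * (fE β h s - fE β h a))) *
        hitTimeExp (rCW N β h) (latticePt N i₀) {latticePt N i₁} =
      ∑ i ∈ range (N + 1), ∑ j ∈ range (N + 1),
        if i ∈ Ico i₀ i₁ ∧ j ≤ i then scaledTerm β h a s N i j else 0 := by
  rw [hitTimeExp_rCW hβ hi hN, mul_sum]
  have hsub : Ico i₀ i₁ ⊆ range (N + 1) := fun i hi => by
    simp only [mem_Ico, mem_range] at hi ⊢
    omega
  rw [← sum_subset hsub fun i _ hi => sum_eq_zero fun j _ => if_neg fun hij => hi hij.1]
  refine sum_congr rfl fun i hi => ?_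
  rw [meanStepTime, mul_sum]
  have hsub : range (i + 1) ⊆ range (N + 1) := range_mono (by simp only [mem_Ico] at hi; omega)
  rw [← sum_subset hsub fun j _ hj => if_neg fun hij => hj (by simp only [mem_range]; omega)]
  exact sum_congr rfl fun j hj => (if_pos ⟨hi, Nat.lt_succ_iff.1 (mem_range.1 hj)⟩).symm

/-- The quadratic lower bound on the gap is spent in two halves: one beats the growth of
`√N * binomAtMean N j` near the ends of the lattice, the other gives the Gaussian bound. -/
lemma exists_abs_scaledTerm_le (H : IsCriticalTriple β h a s b) (hβ : 0 < β) :
    ∃ q > b, ∃ K ≥ 0, ∃ c > 0, ∀ N i j : ℕ, 0 < N → i ≤ N → j ≤ i → latticePt N i ≤ q →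
      |scaledTerm β h a s N i j| ≤
        K * Real.exp (-c * (N * ((latticePt N i - s) ^ 2 + (latticePt N j - a) ^ 2))) := by
  obtain ⟨q, hq, c, hc, hgap⟩ := H.exists_quadratic_le hβ
  obtain ⟨B, hB0, hB⟩ := exists_le_sqrt_mul_binomAtMean
  obtain ⟨C, hC0, hC⟩ := exists_sqrt_mul_binomAtMean_mul_exp_le H.left_mem
    (by positivity : 0 < β * c / 2)
  set r := Real.exp (-β * (2 * (1 + |h|))) * ((1 - q) / 2)
  have hr : 0 < r := mul_pos (Real.exp_pos _) (by linarith [hq.2])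
  refine ⟨q, hq.1, C * B⁻¹ * r⁻¹, by positivity, β * c / 2, by positivity,
    fun N i j hN hi hji hiq => ?_⟩
  set X := N * (latticePt N i - s) ^ 2
  set Y := N * (latticePt N j - a) ^ 2
  have hrate : r ≤ upRate N β h (latticePt N i) :=
    le_upRate hβ.le hN (neg_one_le_latticePt N i) hiq hq.2.le
  have hbinom := hB N i hN hi
  have hrate0 := hr.trans_le hrate
  have hbinom0 := hB0.trans_le hbinom
  have hj := binomAtMean_nonneg (hji.trans hi)
  have hexp : Real.exp (-β * (N * (fE β h s - fE β h a -
      (fE β h (latticePt N i) - fE β h (latticePt N j))))) ≤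
      Real.exp (-(β * c / 2) * Y) * Real.exp (-(β * c / 2) * (X + Y)) := by
    have hle := mul_le_mul_of_nonneg_left (hgap (latticePt N i) (latticePt N j)
      (neg_one_le_latticePt N j) ((latticePt_strictMono hN).monotone hji) hiq)
      (by positivity : 0 ≤ β * N)
    have hX : 0 ≤ β * c / 2 * X := by positivity
    rw [← Real.exp_add, Real.exp_le_exp]
    linarith
  rw [scaledTerm_eq hβ.ne' h a s hN hi (hji.trans hi), abs_of_nonneg (by positivity)]
  calc _ ≤ √N * binomAtMean N j * B⁻¹ * r⁻¹ *
        (Real.exp (-(β * c / 2) * Y) * Real.exp (-(β * c / 2) * (X + Y))) := by gcongr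
    _ = √N * binomAtMean N j * Real.exp (-(β * c / 2) * Y) * B⁻¹ * r⁻¹ *
        Real.exp (-(β * c / 2) * (X + Y)) := by ring
    _ ≤ C * B⁻¹ * r⁻¹ * Real.exp (-(β * c / 2) * (N * ((latticePt N i - s) ^ 2 +
        (latticePt N j - a) ^ 2))) := by
      rw [mul_add (N : ℝ)]
      gcongr
      exact hC N j hN (hji.trans hi)

lemma tendsto_scaledTerm (H : IsCriticalTriple β h a s b) (hβ : 0 < β) {i j : ℕ → ℕ} {t w : ℝ}
    (hi : Tendsto (fun N => scaledPt s N (i N)) atTop (𝓝 t))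
    (hj : Tendsto (fun N => scaledPt a N (j N)) atTop (𝓝 w)) :
    Tendsto (fun N => scaledTerm β h a s N (i N) (j N)) atTop
      (𝓝 (2 / (1 - |s|) * √((1 - s ^ 2) / (1 - a ^ 2)) *
        Real.exp (-β * (-freeEnergyCurv β s / 2 * t ^ 2 + freeEnergyCurv β a / 2 * w ^ 2)))) := by
  have hs := H.saddle_mem
  have ha := H.left_mem
  have hs1 : 0 < 1 - |s| := sub_pos.2 (abs_lt.2 hs)
  have hvar : 0 < 1 - s ^ 2 := sub_pos.2 ((sq_lt_one_iff_abs_lt_one s).2 (abs_lt.2 hs))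
  have hilim := tendsto_latticePt_of_scaledPt hi
  have hjlim := tendsto_latticePt_of_scaledPt hj
  have hrate := tendsto_upRate β h hilim
  rw [exp_max_mul_of_eq_tanh hβ.le H.saddle_eq] at hrate
  have hgap : Tendsto (fun N : ℕ => N * (fE β h s - fE β h a -
      (fE β h (latticePt N (i N)) - fE β h (latticePt N (j N))))) atTop
      (𝓝 (-freeEnergyCurv β s / 2 * t ^ 2 + freeEnergyCurv β a / 2 * w ^ 2)) := by
    convert (tendsto_mul_fE_sub hβ.ne' H.left_eq hj).sub
      (tendsto_mul_fE_sub hβ.ne' H.saddle_eq hi) using 2 <;> ring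
  have : 0 < √Real.pi := Real.sqrt_pos.2 Real.pi_pos
  have hlim := (((tendsto_sqrt_mul_binomAtMean ha hjlim).mul
    ((tendsto_sqrt_mul_binomAtMean hs hilim).inv₀ (by positivity))).mul
      (hrate.inv₀ (by positivity))).mul (hgap.const_mul (-β)).rexp
  convert hlim.congr' ?_ using 2
  · rw [Real.sqrt_div hvar.le]
    have := Real.sqrt_pos.2 hvar
    field_simp
  · filter_upwards [eventually_gt_atTop 0, eventually_le_of_tendsto_latticePt hs.2 hilim,
      eventually_le_of_tendsto_latticePt ha.2 hjlim] with N hN hiN hjN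
    exact (scaledTerm_eq hβ.ne' h a s hN hiN hjN).symm

lemma half_integral_half_integral_exp {p q : ℝ} (hβ : 0 < β) (hp : 0 < p) (hq : 0 < q) (C : ℝ) :
    1 / 2 * ∫ t : ℝ, 1 / 2 * ∫ w : ℝ, C * Real.exp (-β * (p / 2 * t ^ 2 + q / 2 * w ^ 2)) =
      C * (Real.pi / 2) / (β * √(q * p)) := by
  have hgauss {r : ℝ} (hr : 0 < r) :
      ∫ t : ℝ, Real.exp (-(β * r / 2) * t ^ 2) = √(2 * Real.pi / β) / √r := by
    rw [integral_gaussian, ← Real.sqrt_div (by positivity)]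
    congr 1
    field_simp
  have hsplit (t w : ℝ) : C * Real.exp (-β * (p / 2 * t ^ 2 + q / 2 * w ^ 2)) =
      C * Real.exp (-(β * p / 2) * t ^ 2) * Real.exp (-(β * q / 2) * w ^ 2) := by
    rw [mul_assoc, ← Real.exp_add]
    ring_nf
  simp only [hsplit, integral_const_mul, integral_mul_const, hgauss hp, hgauss hq]
  have hsq : √(2 * Real.pi / β) * √(2 * Real.pi / β) = 2 * Real.pi / β :=
    Real.mul_self_sqrt (by positivity)
  rw [Real.sqrt_mul hq.le]
  have := Real.sqrt_pos.2 hp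
  have := Real.sqrt_pos.2 hq
  calc _ = C / (4 * √q * √p) * (√(2 * Real.pi / β) * √(2 * Real.pi / β)) := by
        field_simp
        ring
    _ = _ := by
        rw [hsq]
        field_simp
        ring

lemma eventually_mem_Ico_and_le {i₀ i₁ i j : ℕ → ℕ} (hui : u < s) (hiv : s < v) (has : a < s)
    (hi₀ : Tendsto (fun N => latticePt N (i₀ N)) atTop (𝓝 u))
    (hi₁ : Tendsto (fun N => latticePt N (i₁ N)) atTop (𝓝 v))
    (hi : Tendsto (fun N => latticePt N (i N)) atTop (𝓝 s))
    (hj : Tendsto (fun N => latticePt N (j N)) atTop (𝓝 a)) :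
    ∀ᶠ N in atTop, i N ∈ Ico (i₀ N) (i₁ N) ∧ j N ≤ i N := by
  filter_upwards [hi₀.eventually_lt hi hui, hi.eventually_lt hi₁ hiv, hj.eventually_lt hi has,
    eventually_gt_atTop 0] with N h₀ h₁ hji hN
  have hmono := latticePt_strictMono hN
  exact ⟨mem_Ico.2 ⟨(hmono.lt_iff_lt.1 h₀).le, hmono.lt_iff_lt.1 h₁⟩, (hmono.lt_iff_lt.1 hji).le⟩

theorem tendsto_hitTimeExp_rCW (H : IsCriticalTriple β h a s b) (hβ : 0 < β) {i₀ i₁ : ℕ → ℕ}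
    (hi₀ : Tendsto (fun N => latticePt N (i₀ N)) atTop (𝓝 u)) (hu : u < s)
    (hi₁ : Tendsto (fun N => latticePt N (i₁ N)) atTop (𝓝 v)) (hv : v ∈ Set.Ioc s b) :
    Tendsto (fun N : ℕ => (N : ℝ)⁻¹ * (Real.exp (-β * (N * (fE β h s - fE β h a))) *
        hitTimeExp (rCW N β h) (latticePt N (i₀ N)) {latticePt N (i₁ N)})) atTop
      (𝓝 (Real.pi / (1 - |s|) * √((1 - s ^ 2) / (1 - a ^ 2)) /
        (β * √(freeEnergyCurv β a * -freeEnergyCurv β s)))) := by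
  obtain ⟨q, hbq, K, hK, c, hc, hbound⟩ := exists_abs_scaledTerm_le H hβ
  have hconst := half_integral_half_integral_exp hβ (neg_pos.2 (H.curv_saddle_neg hβ))
    (H.curv_left_pos hβ) (2 / (1 - |s|) * √((1 - s ^ 2) / (1 - a ^ 2)))
  have hlim := tendsto_sum_sum_of_gaussian_bound H.saddle_mem H.left_mem hK hc
    (a := fun N i j => if i ∈ Ico (i₀ N) (i₁ N) ∧ j ≤ i then scaledTerm β h a s N i j else 0)
    ?_ fun t w i j hi hj => (tendsto_scaledTerm H hβ hi hj).congr' ?_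
  · rw [hconst] at hlim
    convert hlim.congr' ?_ using 2
    · ring
    · filter_upwards [hi₀.eventually_lt hi₁ (hu.trans hv.1), eventually_gt_atTop 0,
        eventually_le_of_tendsto_latticePt (hv.2.trans_lt H.right_mem.2) hi₁] with N hlt hN hle
      rw [exp_mul_hitTimeExp_rCW hβ.le h a s ((latticePt_strictMono hN).lt_iff_lt.1 hlt) hle]
  · filter_upwards [hi₁.eventually_lt_const (hv.2.trans_lt hbq), eventually_gt_atTop 0]
      with N hlt hN i hi j _
    split_ifs with hij
    · exact hbound N i j hN hi hij.2
        (((latticePt_strictMono hN).monotone (mem_Ico.1 hij.1).2.le).trans hlt.le)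
    · rw [abs_zero]
      positivity
  · filter_upwards [eventually_mem_Ico_and_le hu hv.1 H.lt_saddle hi₀ hi₁
      (tendsto_latticePt_of_scaledPt hi) (tendsto_latticePt_of_scaledPt hj)] with N hij
    exact (if_pos hij).symm

lemma exists_index_of_mem_Gamma {x : ℕ → ℝ} (hx : ∀ N, x N ∈ Gamma N) :
    ∃ k : ℕ → ℕ, (fun N => latticePt N (k N)) =ᶠ[atTop] x :=
  Eventually.choice ((eventually_gt_atTop 0).mono fun N hN =>
    let ⟨k, _, hk⟩ := (mem_Gamma_iff hN).1 (hx N)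
    ⟨k, hk⟩)

theorem cw_mean_hitting_time_general (H : IsCriticalTriple β h a s b) (hβ : 0 < β) {x y : ℕ → ℝ}
    (hx : ∀ N, x N ∈ Gamma N) (hxu : Tendsto x atTop (𝓝 u)) (hu : u < s)
    (hy : ∀ N, y N ∈ Gamma N) (hyv : Tendsto y atTop (𝓝 v)) (hv : v ∈ Set.Ioc s b) :
    Tendsto (fun N : ℕ => hitTimeExp (rCW N β h) (x N) {y N} /
        (Real.exp (β * N * (fE β h s - fE β h a)) * (Real.pi / (1 - |s|)) *
          √((1 - s ^ 2) / (1 - a ^ 2)) *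
          (N / (β * √(iteratedDeriv 2 (fE β h) a * -iteratedDeriv 2 (fE β h) s)))))
      atTop (𝓝 1) := by
  obtain ⟨i₀, hi₀⟩ := exists_index_of_mem_Gamma hx
  obtain ⟨i₁, hi₁⟩ := exists_index_of_mem_Gamma hy
  have hlim := tendsto_hitTimeExp_rCW H hβ (hxu.congr' hi₀.symm) hu (hyv.congr' hi₁.symm) hv
  have hs1 : 0 < 1 - |s| := sub_pos.2 (abs_lt.2 H.saddle_mem)
  have hvars : 0 < 1 - s ^ 2 := sub_pos.2 ((sq_lt_one_iff_abs_lt_one s).2 (abs_lt.2 H.saddle_mem))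
  have hvara : 0 < 1 - a ^ 2 := sub_pos.2 ((sq_lt_one_iff_abs_lt_one a).2 (abs_lt.2 H.left_mem))
  have hcurv := mul_pos (H.curv_left_pos hβ) (neg_pos.2 (H.curv_saddle_neg hβ))
  rw [iteratedDeriv_two_fE β h H.left_mem, iteratedDeriv_two_fE β h H.saddle_mem]
  have hratio := hlim.div_const (Real.pi / (1 - |s|) * √((1 - s ^ 2) / (1 - a ^ 2)) /
    (β * √(freeEnergyCurv β a * -freeEnergyCurv β s)))
  rw [div_self (by positivity)] at hratio
  refine hratio.congr' ?_
  filter_upwards [hi₀, hi₁] with N h₀ h₁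
  rw [h₀, h₁, neg_mul, Real.exp_neg, ← mul_assoc β]
  simp only [div_eq_mul_inv, mul_inv, inv_inv]
  ring

lemma DoubleWell.isCriticalTriple (D : DoubleWell β h a s b) : IsCriticalTriple β h a s b :=
  ⟨D.lt_star, D.star_lt, D.fix_minus, D.fix_star, D.fix_plus⟩

end Asymptotics

/-- sharp asymptotics of the CW mean metastable hitting time. -/
theorem cw_mean_hitting_time (β : ℝ) (hβ : 1 < β) :
    ∃ h₀ : ℝ, 0 < h₀ ∧ ∀ h : ℝ, 0 < h → h < h₀ →
    ∀ mminus mstar mplus : ℝ, DoubleWell β h mminus mstar mplus →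
    ∀ mminusN mplusN : ℕ → ℝ,
      (∀ N, ClosestIn (Gamma N) mminus (mminusN N)) →
      (∀ N, ClosestIn (Gamma N) mplus (mplusN N)) →
    Tendsto (fun N : ℕ =>
      hitTimeExp (rCW N β h) (mminusN N) {mplusN N} /
        (Real.exp (β * N * (fE β h mstar - fE β h mminus)) *
          (Real.pi / (1 + mstar)) * Real.sqrt ((1 - mstar ^ 2) / (1 - mminus ^ 2)) *
          ((N : ℝ) / (β * Real.sqrt (iteratedDeriv 2 (fE β h) mminus *
            (-(iteratedDeriv 2 (fE β h) mstar)))))))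
      atTop (𝓝 1) := by
  have hβ0 : 0 < β := one_pos.trans hβ
  refine ⟨1, one_pos, fun h hh _ a s b D x y hx hy => ?_⟩
  have H := D.isCriticalTriple
  have habs : 1 - |s| = 1 + s := by rw [abs_of_neg (H.saddle_neg hβ0 hh), sub_neg_eq_add]
  rw [← habs]
  exact cw_mean_hitting_time_general H hβ0 (fun N => (hx N).1)
    (tendsto_of_closestIn_Gamma (Set.Ioo_subset_Icc_self H.left_mem) hx) H.lt_saddle
    (fun N => (hy N).1) (tendsto_of_closestIn_Gamma (Set.Ioo_subset_Icc_self H.right_mem) hy)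
    ⟨H.saddle_lt, le_rfl⟩

end RDCW
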